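/- Let d ∈ ℕ, 1 ≤ p,q < ∞, 0 < s < 1/p, and let S_d be an order 2 digital (t,d)-sequence over 𝔽_2 whose generating matrices E_i = (e_{i,k,ℓ})_{k,ℓ≥1} satisfy e_{i,k,ℓ} = 0 for all k > 2ℓ and all i ∈ {1,…,d}. Then there is a constant C > 0 depending only on p, q, s, d such that for all integers N ≥ 2: ∑_{j∈ℕ_{−1}^d} 2^{|j|(s−1/p+1)q} (∑_{m∈𝔻_j} |⟨D_{S_d}^N, h_{j,m}⟩|^p)^{q/p} ≤ C · 2^{qt} · N^{(s−1)q} (log N)^{d−1}. -/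

import Mathlib

open MeasureTheory
open scoped ENNReal

noncomputable section

/-- The closed unit cube `[0,1]^d`. -/
def unitCube (d : ℕ) : Set (Fin d → ℝ) := Set.univ.pi fun _ => Set.Icc (0:ℝ) 1

/-- The half-open unit cube `[0,1)^d`. -/
def unitCubeIco (d : ℕ) : Set (Fin d → ℝ) := Set.univ.pi fun _ => Set.Ico (0:ℝ) 1

/-- Discrepancy function of the first `N` points of the sequence `S` in `[0,1)^d`. -/
def discSeq (d : ℕ) (S : ℕ → Fin d → ℝ) (N : ℕ) (x : Fin d → ℝ) : ℝ :=
  (Nat.card {k : Fin N // ∀ i, S k i < x i} : ℝ) / N - ∏ i, x i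

/-- One-dimensional Haar function `h_{j,m}`, with `h_{-1,0} = 1_{[0,1)}`. -/
def haar1 (j : ℤ) (m : ℕ) (x : ℝ) : ℝ :=
  if j = -1 then (if 0 ≤ x ∧ x < 1 then 1 else 0)
  else if (m:ℝ)/2^j.toNat ≤ x ∧ x < ((m:ℝ) + 1/2)/2^j.toNat then 1
  else if ((m:ℝ) + 1/2)/2^j.toNat ≤ x ∧ x < ((m:ℝ)+1)/2^j.toNat then -1
  else 0

/-- `d`-dimensional (tensor product) Haar function. -/
def haarFn (d : ℕ) (j : Fin d → ℤ) (m : Fin d → ℕ) (x : Fin d → ℝ) : ℝ :=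
  ∏ i, haar1 (j i) (m i) (x i)

/-- Haar coefficient `⟨f, h_{j,m}⟩`. -/
def haarCoeff (d : ℕ) (f : (Fin d → ℝ) → ℝ) (j : Fin d → ℤ) (m : Fin d → ℕ) : ℝ :=
  ∫ x in unitCube d, f x * haarFn d j m x

/-- `|j| = max(j₁,0) + ⋯ + max(j_d,0)`. -/
def jnorm (d : ℕ) (j : Fin d → ℤ) : ℕ := ∑ i, (j i).toNat

/-- One-dimensional dyadic interval `I_{j,m}`. -/
def dyadicI (j : ℤ) (m : ℕ) : Set ℝ :=
  Set.Ico ((m:ℝ)/2^j.toNat) (((m:ℝ)+1)/2^j.toNat)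

/-- `d`-dimensional dyadic box `I_{j,m}`. -/
def dyadicBox (d : ℕ) (j : Fin d → ℤ) (m : Fin d → ℕ) : Set (Fin d → ℝ) :=
  Set.univ.pi fun i => dyadicI (j i) (m i)

/-- The index set `𝔻_j` as a finset. -/
def Dfin (d : ℕ) (j : Fin d → ℤ) : Finset (Fin d → ℕ) :=
  Fintype.piFinset fun i => Finset.range (2 ^ (j i).toNat)

/-- The index set `𝔻_j` for `j ∈ ℕ₀^d`. -/
def Dfin0 (d : ℕ) (j : Fin d → ℕ) : Finset (Fin d → ℕ) :=
  Fintype.piFinset fun i => Finset.range (2 ^ (j i))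

/-- Coordinate of the `k`-th point of a digital sequence over `𝔽₂` with generating
matrix `C` (`0`-based rows and columns). -/
def digitalCoord (C : ℕ → ℕ → ZMod 2) (k : ℕ) : ℝ :=
  ∑' i : ℕ,
    (((∑ ℓ ∈ Finset.range (k+1), C i ℓ * (if k.testBit ℓ then 1 else 0)).val : ℕ) : ℝ) / 2 ^ (i + 1)

/-- The digital sequence over `𝔽₂` generated by matrices `C 0, …, C (d-1)`. -/
def digitalSeq (d : ℕ) (C : Fin d → ℕ → ℕ → ZMod 2) : ℕ → Fin d → ℝ :=
  fun k j => digitalCoord (C j) k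

/-- `C 0, …, C (d-1)` generate an order `α` digital `(t,n,d)`-net over `𝔽₂`,
where the relevant submatrices have `q` rows (`q ≥ αn`) and `n` columns.
Row indices are `0`-based; the `1`-based row value of row `r` is `r+1`. -/
def IsOrderNet (α n t q d : ℕ) (C : Fin d → ℕ → ℕ → ZMod 2) : Prop :=
  ∀ (ν : Fin d → ℕ) (r : ∀ j : Fin d, Fin (ν j) → ℕ),
    (∀ j, StrictAnti (r j)) →
    (∀ j l, r j l < q) →
    (∑ j, ∑ l ∈ Finset.univ.filter (fun l : Fin (ν j) => (l:ℕ) < α), (r j l + 1)) ≤ α * n - t →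
    LinearIndependent (ZMod 2)
      (fun p : Σ j : Fin d, Fin (ν j) => fun col : Fin n => C p.1 (r p.1 p.2) col)

/-- `C 0, …, C (d-1)` generate an order `α` digital `(t,d)`-sequence over `𝔽₂`. -/
def IsOrderSeq (α t d : ℕ) (C : Fin d → ℕ → ℕ → ZMod 2) : Prop :=
  ∀ n : ℕ, t < α * n → IsOrderNet α n t (α * n) d C

/-- The condition `e_{i,k,ℓ} = 0` for all `k > 2ℓ` (in `1`-based indexing). -/
def Triangular2 (d : ℕ) (E : Fin d → ℕ → ℕ → ZMod 2) : Prop :=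
  ∀ i k ℓ, 2 * (ℓ + 1) < k + 1 → E i k ℓ = 0

open scoped Classical in
/-- The quantity `λ(U)⁻¹ ∑_{j ∈ ℕ₀^d} 2^{|j|} ∑_{m : I_{j,m} ⊆ U} ⟨f,h_{j,m}⟩²`. -/
def bmoSq (d : ℕ) (f : (Fin d → ℝ) → ℝ) (U : Set (Fin d → ℝ)) : ℝ≥0∞ :=
  (volume U)⁻¹ * ∑' j : Fin d → ℕ, ∑ m ∈ Dfin0 d j,
    if dyadicBox d (fun i => (j i : ℤ)) m ⊆ U then
      (2:ℝ≥0∞) ^ (∑ i, j i) * ENNReal.ofReal ((haarCoeff d f (fun i => (j i : ℤ)) m)^2)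
    else 0

/-- The BMO (semi-)norm `‖f | bmo^d‖`. -/
def bmoNorm (d : ℕ) (f : (Fin d → ℝ) → ℝ) : ℝ≥0∞ :=
  (⨆ U : {U : Set (Fin d → ℝ) // MeasurableSet U ∧ U ⊆ unitCubeIco d ∧ 0 < volume U},
    bmoSq d f U.1) ^ (1/2 : ℝ)

/-- The Orlicz norm of `f` on `[0,1)^d` with respect to the Young function `ψ`,
with the convention `inf ∅ = ∞`. -/
def orliczNorm (d : ℕ) (ψ : ℝ → ℝ) (f : (Fin d → ℝ) → ℝ) : ℝ≥0∞ :=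
  ⨅ K : {K : ℝ // 0 < K ∧ ∫ x in unitCubeIco d, ψ (|f x| / K) ≤ 1}, ENNReal.ofReal K.1

/-- `ψ` is a Young function which coincides with `exp(x^β) - 1` for all large `x`. -/
def IsYoungExp (β : ℝ) (ψ : ℝ → ℝ) : Prop :=
  ConvexOn ℝ (Set.Ici 0) ψ ∧ ψ 0 = 0 ∧ (∀ x : ℝ, 0 < x → 0 < ψ x) ∧
    ∃ x₀ : ℝ, ∀ x ≥ x₀, ψ x = Real.exp (x ^ β) - 1

/-- The set of valid Haar indices `j ∈ ℕ_{-1}^d`. -/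
def validJ (d : ℕ) : Set (Fin d → ℤ) := {j | ∀ i, -1 ≤ j i}

/-- The `q`-th power of the Haar-characterization of the `S^s_{p,q}B` norm:
`∑_{j ∈ ℕ_{-1}^d} 2^{|j|(s-1/p+1)q} (∑_{m ∈ 𝔻_j} |⟨f,h_{j,m}⟩|^p)^{q/p}`. -/
def besovSum (d : ℕ) (p q s : ℝ) (f : (Fin d → ℝ) → ℝ) : ℝ≥0∞ :=
  ∑' j : validJ d,
    ENNReal.ofReal ((2:ℝ) ^ ((jnorm d j.1 : ℝ) * (s - 1/p + 1) * q) *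
      (∑ m ∈ Dfin d j.1, |haarCoeff d f j.1 m| ^ p) ^ (q / p))

/-- Coordinate of the `k`-th point of a digital net with `q × n` generating matrix `C`. -/
def netCoord (q n : ℕ) (C : ℕ → ℕ → ZMod 2) (k : ℕ) : ℝ :=
  ∑ i ∈ Finset.range q,
    ((∑ ℓ ∈ Finset.range n, C i ℓ * (if k.testBit ℓ then 1 else 0)).val : ℝ) / 2 ^ (i + 1)

/-- `n_{μ+1}`, with the convention `n_{r+1} = log₂ N` (indices `1`-based, `n` stored `0`-based). -/
def nExt (r : ℕ) (n : Fin r → ℕ) (N : ℕ) (μ : ℕ) : ℝ :=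
  if h : μ < r then (n ⟨μ, h⟩ : ℝ) else Real.logb 2 N

/-- `n_μ`, with the convention `n_0 = 0` (indices `1`-based, `n` stored `0`-based). -/
def nPrev (r : ℕ) (n : Fin r → ℕ) (μ : ℕ) : ℝ :=
  if h : 1 ≤ μ ∧ μ ≤ r then (n ⟨μ - 1, by omega⟩ : ℝ) else 0

/-- The dyadic square function `Sf`, valued in `ℝ≥0∞`. -/
def sqFnE (d : ℕ) (f : (Fin d → ℝ) → ℝ) (x : Fin d → ℝ) : ℝ≥0∞ :=
  (∑' j : validJ d, ∑ m ∈ Dfin d j.1,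
    ENNReal.ofReal ((2:ℝ) ^ (2 * jnorm d j.1) * (haarCoeff d f j.1 m)^2 *
      (dyadicBox d j.1 m).indicator (fun _ => (1:ℝ)) x)) ^ (1/2 : ℝ)

/-- `sup_{p > 1} p^{-1/β} ‖f‖_{L_p([0,1]^d)}`. -/
def supLp (d : ℕ) (β : ℝ) (f : (Fin d → ℝ) → ℝ) : ℝ≥0∞ :=
  ⨆ p : {p : ℝ // 1 < p},
    ENNReal.ofReal ((p:ℝ) ^ (-(1/β))) * eLpNorm f (ENNReal.ofReal (p:ℝ)) (volume.restrict (unitCube d))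

/-- `‖f | 𝒟₀^d‖² = ∑_{j ∈ ℕ₀^d} 2^{|j|} ∑_{m ∈ 𝔻_j} ⟨f,h_{j,m}⟩²`. -/
def dNormSq (d : ℕ) (f : (Fin d → ℝ) → ℝ) : ℝ≥0∞ :=
  ∑' j : Fin d → ℕ, ∑ m ∈ Dfin0 d j,
    ENNReal.ofReal ((2:ℝ) ^ (∑ i, j i) * (haarCoeff d f (fun i => (j i : ℤ)) m)^2)

/-- `‖f | 𝒟₀^d‖`. -/
def dNorm (d : ℕ) (f : (Fin d → ℝ) → ℝ) : ℝ≥0∞ := (dNormSq d f) ^ (1/2 : ℝ)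


def Gf (j : ℤ) (m : ℕ) (z : ℝ) : ℝ :=
  ∫ x in Set.Icc (0:ℝ) 1, (if z < x then (1:ℝ) else 0) * haar1 j m x

def cf (j : ℤ) (m : ℕ) : ℝ := ∫ x in Set.Icc (0:ℝ) 1, x * haar1 j m x

lemma haar1_neg (m : ℕ) : haar1 (-1) m = (Set.Ico (0:ℝ) 1).indicator (fun _ => (1:ℝ)) := by
  funext x
  simp [haar1, Set.indicator_apply]

lemma haar1_nonneg (J m : ℕ) : haar1 (J:ℤ) m =
    fun x => (Set.Ico ((m:ℝ)/2^J) (((m:ℝ)+1/2)/2^J)).indicator (fun _ => (1:ℝ)) x -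
      (Set.Ico (((m:ℝ)+1/2)/2^J) (((m:ℝ)+1)/2^J)).indicator (fun _ => (1:ℝ)) x := by
  funext x
  have h : ¬ ((J:ℤ) = -1) := by omega
  simp only [haar1, h, if_false, Int.toNat_natCast, Set.indicator_apply, Set.mem_Ico]
  split_ifs <;> norm_num
  all_goals linarith

lemma haar1_measurable (j : ℤ) (hj : -1 ≤ j) (m : ℕ) : Measurable (haar1 j m) := by
  rcases hj.eq_or_lt with h | h
  · subst h
    rw [haar1_neg]
    exact measurable_const.indicator measurableSet_Ico
  · obtain ⟨J, rfl⟩ := Int.eq_ofNat_of_zero_le (by omega : 0 ≤ j)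
    rw [haar1_nonneg]
    exact (measurable_const.indicator measurableSet_Ico).sub
      (measurable_const.indicator measurableSet_Ico)

lemma haar1_abs_le (j : ℤ) (m : ℕ) (x : ℝ) : |haar1 j m x| ≤ 1 := by
  unfold haar1
  split_ifs <;> norm_num

lemma integrable_aux (j : ℤ) (hj : -1 ≤ j) (m : ℕ) (f : ℝ → ℝ) (hf : Measurable f)
    (hb : ∀ x ∈ Set.Icc (0:ℝ) 1, |f x| ≤ 1) :
    IntegrableOn (fun x => f x * haar1 j m x) (Set.Icc (0:ℝ) 1) := by
  refine Measure.integrableOn_of_bounded (M := 1) (by simp)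
    ((hf.mul (haar1_measurable j hj m)).aestronglyMeasurable) ?_
  filter_upwards [ae_restrict_mem measurableSet_Icc] with x hx
  rw [Real.norm_eq_abs, abs_mul]
  nlinarith [hb x hx, haar1_abs_le j m x, abs_nonneg (f x), abs_nonneg (haar1 j m x)]

lemma unitCube_restrict (d : ℕ) : (volume : Measure (Fin d → ℝ)).restrict (unitCube d) =
    Measure.pi (fun _ : Fin d => (volume : Measure ℝ).restrict (Set.Icc (0:ℝ) 1)) := by
  rw [unitCube, volume_pi, Measure.restrict_pi_pi]

lemma haarCoeff_disc (d : ℕ) (S : ℕ → Fin d → ℝ) (N : ℕ) (hN : 0 < N) (j : Fin d → ℤ)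
    (hj : ∀ i, -1 ≤ j i) (m : Fin d → ℕ) :
    haarCoeff d (discSeq d S N) j m = (1 / (N:ℝ)) * ∑ k ∈ Finset.range N,
      (∏ i, Gf (j i) (m i) (S k i) - ∏ i, cf (j i) (m i)) := by
  have hNR : (N:ℝ) ≠ 0 := by positivity
  have hfun : ∀ x : Fin d → ℝ, discSeq d S N x * haarFn d j m x =
      (1 / (N:ℝ)) * (∑ k ∈ Finset.range N,
        ∏ i, ((if S k i < x i then (1:ℝ) else 0) * haar1 (j i) (m i) (x i))) -
        ∏ i, (x i * haar1 (j i) (m i) (x i)) := by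
    intro x
    have hc : (Nat.card {k : Fin N // ∀ i, S k i < x i} : ℝ) =
        ∑ k ∈ Finset.range N, ∏ i, (if S k i < x i then (1:ℝ) else 0) := by
      classical
      rw [Nat.card_eq_fintype_card, Fintype.card_subtype, Finset.card_filter]
      push_cast
      rw [Finset.sum_range]
      refine Finset.sum_congr rfl fun k _ => ?_
      by_cases h : ∀ i, S k i < x i
      · simp [h]
      · rw [if_neg h]
        push Not at h
        obtain ⟨i, hi⟩ := h
        exact (Finset.prod_eq_zero (Finset.mem_univ i) (by simp [hi])).symm
    simp only [discSeq, haarFn, hc, Finset.prod_mul_distrib, ← Finset.sum_mul]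
    ring
  have hint1 : ∀ k, Integrable (fun x : Fin d → ℝ =>
      ∏ i, ((if S k i < x i then (1:ℝ) else 0) * haar1 (j i) (m i) (x i)))
      (Measure.pi (fun _ : Fin d => (volume : Measure ℝ).restrict (Set.Icc (0:ℝ) 1))) := by
    intro k
    refine Integrable.fintype_prod (f := fun i y => (if S k i < y then (1:ℝ) else 0) * haar1 (j i) (m i) y) fun i => ?_
    refine integrable_aux (j i) (hj i) (m i) (fun y => if S k i < y then (1:ℝ) else 0) ?_ ?_
    · exact Measurable.ite measurableSet_Ioi measurable_const measurable_const
    · intro x _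
      split_ifs <;> norm_num
  have hint2 : Integrable (fun x : Fin d → ℝ => ∏ i, (x i * haar1 (j i) (m i) (x i)))
      (Measure.pi (fun _ : Fin d => (volume : Measure ℝ).restrict (Set.Icc (0:ℝ) 1))) := by
    refine Integrable.fintype_prod (f := fun i y => y * haar1 (j i) (m i) y) fun i => ?_
    refine integrable_aux (j i) (hj i) (m i) (fun y => y) measurable_id ?_
    intro x hx
    rw [abs_of_nonneg hx.1]
    exact hx.2
  unfold haarCoeff
  simp_rw [hfun]
  rw [unitCube_restrict, integral_sub, integral_const_mul, integral_finsetSum]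
  · have e1 : ∀ k, ∫ x, ∏ i, ((if S k i < x i then (1:ℝ) else 0) * haar1 (j i) (m i) (x i))
        ∂(Measure.pi (fun _ : Fin d => (volume : Measure ℝ).restrict (Set.Icc (0:ℝ) 1))) =
        ∏ i, Gf (j i) (m i) (S k i) := by
      intro k
      exact integral_fintype_prod_eq_prod (μ := fun _ : Fin d => (volume : Measure ℝ).restrict (Set.Icc (0:ℝ) 1))
        (fun i y => (if S k i < y then (1:ℝ) else 0) * haar1 (j i) (m i) y)
    have e2 : ∫ x, ∏ i, (x i * haar1 (j i) (m i) (x i))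
        ∂(Measure.pi (fun _ : Fin d => (volume : Measure ℝ).restrict (Set.Icc (0:ℝ) 1))) =
        ∏ i, cf (j i) (m i) :=
      integral_fintype_prod_eq_prod (μ := fun _ : Fin d => (volume : Measure ℝ).restrict (Set.Icc (0:ℝ) 1))
        (fun i y => y * haar1 (j i) (m i) y)
    simp_rw [e1]
    rw [e2, Finset.sum_sub_distrib]
    simp only [Finset.sum_const, Finset.card_range, nsmul_eq_mul]
    field_simp
  · intro k _
    exact hint1 k
  · exact (integrable_finsetSum _ fun k _ => hint1 k).const_mul _
  · exact hint2

lemma integral_ind (z u v : ℝ) (hu : 0 ≤ u) (hv : v ≤ 1) :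
    ∫ x in Set.Icc (0:ℝ) 1, (if z < x then (1:ℝ) else 0) *
      (Set.Ico u v).indicator (fun _ => (1:ℝ)) x = max (v - max u z) 0 := by
  have h1 : ∀ᵐ x : ℝ ∂(volume.restrict (Set.Icc (0:ℝ) 1)), (if z < x then (1:ℝ) else 0) *
      (Set.Ico u v).indicator (fun _ => (1:ℝ)) x =
      (Set.Ioo (max u z) v).indicator (fun _ => (1:ℝ)) x := by
    have : ∀ᵐ x : ℝ ∂(volume.restrict (Set.Icc (0:ℝ) 1)), x ≠ u :=
      ae_restrict_of_ae (Measure.ae_ne volume u)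
    filter_upwards [this] with x hx
    simp only [Set.indicator_apply, Set.mem_Ico, Set.mem_Ioo, max_lt_iff]
    have : u ≤ x ↔ u < x := ⟨fun h => lt_of_le_of_ne h (Ne.symm hx), le_of_lt⟩
    simp only [this]
    split_ifs <;> norm_num <;> tauto
  rw [integral_congr_ae h1, integral_indicator measurableSet_Ioo,
    Measure.restrict_restrict measurableSet_Ioo, Set.inter_eq_left.2]
  · simp [Measure.real, ENNReal.toReal_ofReal']
  · intro x hx
    exact ⟨hu.trans ((le_max_left _ _).trans hx.1.le), hx.2.le.trans hv⟩

lemma integral_id_ind (u v : ℝ) (hu : 0 ≤ u) (huv : u ≤ v) (hv : v ≤ 1) :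
    ∫ x in Set.Icc (0:ℝ) 1, x *
      (Set.Ico u v).indicator (fun _ => (1:ℝ)) x = (v^2 - u^2) / 2 := by
  have h1 : ∀ x : ℝ, x * (Set.Ico u v).indicator (fun _ => (1:ℝ)) x =
      (Set.Ico u v).indicator (fun x => x) x := by
    intro x
    simp [Set.indicator_apply]
  simp_rw [h1]
  rw [integral_indicator measurableSet_Ico,
    Measure.restrict_restrict measurableSet_Ico, Set.inter_eq_left.2,
    integral_Ico_eq_integral_Ioc, ← intervalIntegral.integral_of_le huv, integral_id]
  intro x hx
  exact ⟨hu.trans hx.1, hx.2.le.trans hv⟩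

lemma Gf_neg (m : ℕ) (z : ℝ) (hz0 : 0 ≤ z) (hz1 : z ≤ 1) : Gf (-1) m z = 1 - z := by
  unfold Gf
  rw [haar1_neg, integral_ind z 0 1 le_rfl le_rfl, max_eq_right hz0, max_eq_left (by linarith)]

lemma cf_neg (m : ℕ) : cf (-1) m = 1 / 2 := by
  unfold cf
  rw [haar1_neg, integral_id_ind 0 1 le_rfl zero_le_one le_rfl]
  norm_num

lemma ind_integrable (f : ℝ → ℝ) (hf : Measurable f)
    (hb : ∀ x ∈ Set.Icc (0:ℝ) 1, |f x| ≤ 1) (u v : ℝ) :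
    IntegrableOn (fun x => f x * (Set.Ico u v).indicator (fun _ => (1:ℝ)) x) (Set.Icc (0:ℝ) 1) := by
  refine Measure.integrableOn_of_bounded (M := 1) (by simp)
    ((hf.mul (measurable_const.indicator measurableSet_Ico)).aestronglyMeasurable) ?_
  filter_upwards [ae_restrict_mem measurableSet_Icc] with x hx
  rw [Real.norm_eq_abs, abs_mul]
  have h2 : |(Set.Ico u v).indicator (fun _ => (1:ℝ)) x| ≤ 1 := by
    rw [Set.indicator_apply]
    split_ifs <;> norm_num
  nlinarith [hb x hx, abs_nonneg (f x), abs_nonneg ((Set.Ico u v).indicator (fun _ => (1:ℝ)) x)]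

lemma dyad_bounds (J m : ℕ) (hm : m < 2 ^ J) : 0 ≤ (m:ℝ) / 2 ^ J ∧ ((m:ℝ) + 1) / 2 ^ J ≤ 1 := by
  refine ⟨by positivity, ?_⟩
  rw [div_le_one (by positivity)]
  exact_mod_cast hm

lemma Gf_nonneg (J m : ℕ) (hm : m < 2 ^ J) (z : ℝ) :
    Gf (J:ℤ) m z = max (((m:ℝ)+1/2)/2^J - max ((m:ℝ)/2^J) z) 0 -
      max (((m:ℝ)+1)/2^J - max (((m:ℝ)+1/2)/2^J) z) 0 := by
  obtain ⟨h0, h1⟩ := dyad_bounds J m hm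
  have h2 : ((m:ℝ)+1/2)/2^J ≤ ((m:ℝ)+1)/2^J := by gcongr; norm_num
  have hmeas : Measurable (fun x : ℝ => if z < x then (1:ℝ) else 0) :=
    Measurable.ite measurableSet_Ioi measurable_const measurable_const
  have hb : ∀ x ∈ Set.Icc (0:ℝ) 1, |(if z < x then (1:ℝ) else 0)| ≤ 1 := by
    intro x _
    split_ifs <;> norm_num
  unfold Gf
  rw [haar1_nonneg]
  simp_rw [mul_sub]
  rw [integral_sub (ind_integrable _ hmeas hb _ _) (ind_integrable _ hmeas hb _ _),
    integral_ind _ _ _ h0 (h2.trans h1), integral_ind _ _ _ (by positivity) h1]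

lemma cf_nonneg (J m : ℕ) (hm : m < 2 ^ J) : cf (J:ℤ) m = - (1 / 4) / (2 ^ J * 2 ^ J) := by
  obtain ⟨h0, h1⟩ := dyad_bounds J m hm
  have h2 : ((m:ℝ)+1/2)/2^J ≤ ((m:ℝ)+1)/2^J := by gcongr; norm_num
  have h3 : (m:ℝ)/2^J ≤ ((m:ℝ)+1/2)/2^J := by gcongr; norm_num
  have hb : ∀ x ∈ Set.Icc (0:ℝ) 1, |x| ≤ 1 := by
    intro x hx
    rw [abs_of_nonneg hx.1]
    exact hx.2
  unfold cf
  rw [haar1_nonneg]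
  simp_rw [mul_sub]
  rw [integral_sub (ind_integrable (fun x => x) measurable_id hb _ _) (ind_integrable (fun x => x) measurable_id hb _ _),
    integral_id_ind _ _ h0 h3 (h2.trans h1), integral_id_ind _ _ (by positivity) h2 h1]
  field_simp
  ring

lemma Gf_zero_of_lt (J m : ℕ) (hm : m < 2 ^ J) (z : ℝ) (hz : z ≤ (m:ℝ)/2^J) :
    Gf (J:ℤ) m z = 0 := by
  have h2 : (0:ℝ) < 2 ^ J := by positivity
  have h4 : ((m:ℝ)+1/2)/2^J = (m:ℝ)/2^J + (1/2)/2^J := by ring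
  have h5 : ((m:ℝ)+1)/2^J = (m:ℝ)/2^J + (1/2)/2^J + (1/2)/2^J := by ring
  have h6 : (0:ℝ) < (1/2)/2^J := by positivity
  rw [Gf_nonneg J m hm, max_eq_left hz, max_eq_left (a := ((m:ℝ)+1/2)/2^J) (b := z) (by linarith), max_eq_left (by linarith),
    max_eq_left (by linarith)]
  linarith

lemma Gf_zero_of_ge (J m : ℕ) (hm : m < 2 ^ J) (z : ℝ) (hz : ((m:ℝ)+1)/2^J ≤ z) :
    Gf (J:ℤ) m z = 0 := by
  have h4 : ((m:ℝ)+1/2)/2^J = (m:ℝ)/2^J + (1/2)/2^J := by ring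
  have h5 : ((m:ℝ)+1)/2^J = (m:ℝ)/2^J + (1/2)/2^J + (1/2)/2^J := by ring
  have h6 : (0:ℝ) < (1/2)/2^J := by positivity
  rw [Gf_nonneg J m hm, max_eq_right (a := (m:ℝ)/2^J) (by linarith), max_eq_right (a := ((m:ℝ)+1/2)/2^J) (by linarith),
    max_eq_right (by linarith), max_eq_right (by linarith)]
  norm_num

lemma Gf_left (J m : ℕ) (hm : m < 2 ^ J) (u : ℝ) (h0 : 0 ≤ u) (h1 : u ≤ 1 / 2) :
    Gf (J:ℤ) m (((m:ℝ) + u) / 2 ^ J) = - u / 2 ^ J := by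
  have h2 : ((m:ℝ)+1/2)/2^J = (m:ℝ)/2^J + (1/2)/2^J := by ring
  have h3 : ((m:ℝ)+1)/2^J = (m:ℝ)/2^J + (1/2)/2^J + (1/2)/2^J := by ring
  have h4 : ((m:ℝ)+u)/2^J = (m:ℝ)/2^J + u/2^J := by ring
  have h5 : (0:ℝ) < (1/2)/2^J := by positivity
  have h6 : 0 ≤ u/2^J := by positivity
  have h7 : u/2^J ≤ (1/2)/2^J := by gcongr
  rw [Gf_nonneg J m hm, max_eq_right (a := (m:ℝ)/2^J) (by linarith), max_eq_left (a := ((m:ℝ)+1/2)/2^J) (by linarith),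
    max_eq_left (by linarith), max_eq_left (by linarith), h2, h3, h4]
  ring

lemma Gf_right (J m : ℕ) (hm : m < 2 ^ J) (u : ℝ) (h0 : 1 / 2 ≤ u) (h1 : u ≤ 1) :
    Gf (J:ℤ) m (((m:ℝ) + u) / 2 ^ J) = - (1 - u) / 2 ^ J := by
  have h2 : ((m:ℝ)+1/2)/2^J = (m:ℝ)/2^J + (1/2)/2^J := by ring
  have h3 : ((m:ℝ)+1)/2^J = (m:ℝ)/2^J + (1/2)/2^J + (1/2)/2^J := by ring
  have h4 : ((m:ℝ)+u)/2^J = (m:ℝ)/2^J + u/2^J := by ring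
  have h5 : (0:ℝ) < (1/2)/2^J := by positivity
  have h6 : (1/2)/2^J ≤ u/2^J := by gcongr
  have h7 : u/2^J ≤ 1/2^J := by gcongr
  have h8 : (1:ℝ)/2^J = (1/2)/2^J + (1/2)/2^J := by ring
  rw [Gf_nonneg J m hm, max_eq_right (a := (m:ℝ)/2^J) (by linarith), max_eq_right (a := ((m:ℝ)+1/2)/2^J) (by linarith),
    max_eq_right (by linarith), max_eq_left (by linarith), h4]
  ring

lemma toNat_neg1 : (-1:ℤ).toNat = 0 := rfl

def pref : ℕ → (ℕ → ZMod 2) → ℕ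
  | 0, _ => 0
  | J + 1, y => 2 * pref J y + (y J).val

def zv (y : ℕ → ZMod 2) : ℝ := ∑' i : ℕ, ((y i).val : ℝ) / 2 ^ (i + 1)

def sg (x : ZMod 2) : ℝ := if x = 0 then 1 else -1

lemma zmod2_cases (x : ZMod 2) : x = 0 ∨ x = 1 := by
  revert x; decide

lemma sg_zero : sg 0 = 1 := by simp [sg]
lemma sg_one : sg 1 = -1 := by simp [sg]

lemma sg_add_one (x : ZMod 2) : sg (x + 1) = - sg x := by
  rcases zmod2_cases x with rfl | rfl
  · simp [sg]
  · have : (1:ZMod 2) + 1 = 0 := by decide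
    rw [this]; simp [sg]

lemma abs_sg (x : ZMod 2) : |sg x| = 1 := by
  unfold sg; split_ifs <;> norm_num

lemma val_eq_sg (x : ZMod 2) : (x.val : ℝ) = (1 - sg x) / 2 := by
  rcases zmod2_cases x with rfl | rfl
  · simp [sg]
  · rw [sg_one, show (1:ZMod 2).val = 1 from rfl]; norm_num

lemma val_le_one (x : ZMod 2) : x.val ≤ 1 := by
  have := ZMod.val_lt x; omega

lemma zv_eq_sum (y : ℕ → ZMod 2) (K : ℕ) (hy : ∀ i, K ≤ i → y i = 0) :
    zv y = ∑ i ∈ Finset.range K, ((y i).val : ℝ) / 2 ^ (i + 1) := by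
  unfold zv
  refine tsum_eq_sum fun i hi => ?_
  rw [hy i (by simpa using hi)]
  simp

lemma pref_sum (y : ℕ → ZMod 2) (J : ℕ) :
    ∑ i ∈ Finset.range J, ((y i).val : ℝ) / 2 ^ (i + 1) = (pref J y : ℝ) / 2 ^ J := by
  induction J with
  | zero => simp [pref]
  | succ J ih =>
    rw [Finset.sum_range_succ, ih, pref]
    push_cast
    field_simp
    ring

lemma pref_lt (y : ℕ → ZMod 2) (J : ℕ) : pref J y < 2 ^ J := by
  induction J with
  | zero => simp [pref]
  | succ J ih =>
    have := val_le_one (y J)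
    rw [pref, pow_succ]; omega

lemma pref_congr (y y' : ℕ → ZMod 2) (J : ℕ) (h : ∀ i < J, y i = y' i) : pref J y = pref J y' := by
  induction J with
  | zero => simp [pref]
  | succ J ih =>
    rw [pref, pref, ih (fun i hi => h i (by omega)), h J (by omega)]

lemma pref_mono_le (y y' : ℕ → ZMod 2) (J J' : ℕ) (hJ : J' ≤ J) (h : pref J y = pref J y') :
    pref J' y = pref J' y' := by
  induction J with
  | zero => 
    obtain rfl : J' = 0 := by omega
    exact h
  | succ J ih =>
    rcases hJ.eq_or_lt with rfl | h1
    · exact h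
    · refine ih (by omega) ?_
      rw [pref, pref] at h
      have := val_le_one (y J)
      have := val_le_one (y' J)
      omega

/-- every `m < 2^J` is the prefix of some digit pattern -/
lemma pref_surj (J : ℕ) : ∀ m < 2 ^ J, ∃ b : ℕ → ZMod 2, pref J b = m := by
  induction J with
  | zero => 
    intro m hm
    refine ⟨fun _ => 0, ?_⟩
    simp [pref]; simp at hm; exact hm.symm
  | succ J ih =>
    intro m hm
    rw [pow_succ] at hm
    obtain ⟨b, hb⟩ := ih (m / 2) (by omega)
    refine ⟨fun i => if i < J then b i else ((m % 2 : ℕ) : ZMod 2), ?_⟩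
    rw [pref, pref_congr _ b J (by intro i hi; simp [hi]), hb]
    simp only [lt_irrefl, if_false, ZMod.val_natCast]
    omega

lemma geom_half (K : ℕ) (c : ℝ) : ∑ l ∈ Finset.range K, c / 2 ^ (l + 1) = c - c / 2 ^ K := by
  induction K with
  | zero => simp
  | succ K ih =>
    rw [Finset.sum_range_succ, ih]
    field_simp
    ring

lemma digit_sum_sg (y : ℕ → ZMod 2) (K : ℕ) :
    ∑ l ∈ Finset.range K, ((y l).val : ℝ) / 2 ^ (l + 1) =
      1 / 2 - 1 / 2 ^ (K + 1) - ∑ l ∈ Finset.range K, sg (y l) / 2 ^ (l + 2) := by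
  have h := geom_half K (1/2)
  have : ∀ l, ((y l).val : ℝ) / 2 ^ (l + 1) = (1/2) / 2 ^ (l + 1) - sg (y l) / 2 ^ (l + 2) := by
    intro l
    rw [val_eq_sg]
    field_simp
    ring
  simp_rw [this]
  rw [Finset.sum_sub_distrib, h]
  congr 1
  field_simp
  ring

lemma digit_sum_bounds (y : ℕ → ZMod 2) (K : ℕ) :
    0 ≤ ∑ l ∈ Finset.range K, ((y l).val : ℝ) / 2 ^ (l + 1) ∧ 
      ∑ l ∈ Finset.range K, ((y l).val : ℝ) / 2 ^ (l + 1) < 1 := by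
  refine ⟨Finset.sum_nonneg fun i _ => by positivity, ?_⟩
  rw [pref_sum, div_lt_one (by positivity)]
  exact_mod_cast pref_lt y K

lemma zv_split (y : ℕ → ZMod 2) (K J : ℕ) (hy : ∀ i, K ≤ i → y i = 0) :
    zv y = ((pref J y : ℝ) + (((y J).val : ℝ) / 2 +
      (∑ l ∈ Finset.range K, ((y (J + 1 + l)).val : ℝ) / 2 ^ (l + 1)) / 2)) / 2 ^ J := by
  rw [zv_eq_sum y (J + 1 + K) (fun i hi => hy i (by omega)), Finset.sum_range_add, pref_sum, pref]
  push_cast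
  have : ∀ l, ((y (J + 1 + l)).val : ℝ) / 2 ^ (J + 1 + l + 1) =
      (((y (J + 1 + l)).val : ℝ) / 2 ^ (l + 1)) / 2 ^ (J + 1) := by
    intro l
    field_simp
    ring
  simp_rw [this]
  rw [← Finset.sum_div]
  field_simp
  ring

lemma Gf_digits (J m : ℕ) (hm : m < 2 ^ J) (y : ℕ → ZMod 2) (K : ℕ) (hy : ∀ i, K ≤ i → y i = 0) :
    Gf (J:ℤ) m (zv y) = if pref J y = m then
      (-(1/4) + sg (y J) * ((∑ l ∈ Finset.range K, sg (y (J + 1 + l)) / 2 ^ (l + 3)) +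
        1 / 2 ^ (K + 2))) / 2 ^ J else 0 := by
  obtain ⟨v0, v1⟩ := digit_sum_bounds (fun l => y (J + 1 + l)) K
  have hv := digit_sum_sg (fun l => y (J + 1 + l)) K
  rw [zv_split y K J hy]
  set v := ∑ l ∈ Finset.range K, ((y (J + 1 + l)).val : ℝ) / 2 ^ (l + 1) with hvdef
  have hs : ∑ l ∈ Finset.range K, sg (y (J + 1 + l)) / 2 ^ (l + 3) =
      (∑ l ∈ Finset.range K, sg (y (J + 1 + l)) / 2 ^ (l + 2)) / 2 := by
    rw [Finset.sum_div]
    refine Finset.sum_congr rfl fun l _ => ?_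
    field_simp
    ring
  rw [hs]
  have hK : (1:ℝ) / 2 ^ (K + 2) = (1 / 2 ^ (K + 1)) / 2 := by field_simp; ring
  rw [hK]
  have hyv : ((y J).val : ℝ) ≤ 1 := by exact_mod_cast val_le_one (y J)
  have hyv0 : (0:ℝ) ≤ ((y J).val : ℝ) := by positivity
  split_ifs with h
  · rw [h]
    rcases zmod2_cases (y J) with h0 | h0
    · rw [h0, sg_zero, ZMod.val_zero, Gf_left J m hm _ (by push_cast; linarith) (by push_cast; linarith)]
      push_cast
      congr 1
      linarith
    · rw [h0, sg_one, show (1:ZMod 2).val = 1 from rfl, Gf_right J m hm _ (by push_cast; linarith) (by push_cast; linarith)]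
      push_cast
      congr 1
      linarith
  · rcases lt_or_gt_of_ne h with h | h
    · refine Gf_zero_of_lt J m hm _ ?_
      gcongr
      have : ((pref J y : ℕ) : ℝ) + 1 ≤ m := by exact_mod_cast h
      linarith
    · refine Gf_zero_of_ge J m hm _ ?_
      refine div_le_div_of_nonneg_right ?_ (by positivity)
      have : (m:ℝ) + 1 ≤ ((pref J y : ℕ) : ℝ) := by exact_mod_cast h
      linarith

lemma Gf_digits_neg (m : ℕ) (y : ℕ → ZMod 2) (K : ℕ) (hy : ∀ i, K ≤ i → y i = 0) :
    Gf (-1) m (zv y) = 1 / 2 + ((∑ l ∈ Finset.range K, sg (y l) / 2 ^ (l + 2)) + 1 / 2 ^ (K + 1)) := by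
  obtain ⟨v0, v1⟩ := digit_sum_bounds y K
  rw [zv_eq_sum y K hy, Gf_neg m _ v0 v1.le, digit_sum_sg]
  ring

lemma Gf_abs_le (j : ℤ) (hj : -1 ≤ j) (m : ℕ) (hm : m < 2 ^ j.toNat) (y : ℕ → ZMod 2) (K : ℕ)
    (hy : ∀ i, K ≤ i → y i = 0) :
    |Gf j m (zv y)| ≤ if pref j.toNat y = m then 1 / 2 ^ j.toNat else 0 := by
  rcases hj.eq_or_lt with h | h
  · subst h
    obtain ⟨v0, v1⟩ := digit_sum_bounds y K
    have hm0 : m = 0 := by simpa using hm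
    rw [zv_eq_sum y K hy, Gf_neg m _ v0 v1.le]
    simp only [toNat_neg1, pref, hm0, if_true]
    rw [pow_zero, div_one, abs_le]; constructor <;> linarith
  · obtain ⟨J, rfl⟩ := Int.eq_ofNat_of_zero_le (by omega : 0 ≤ j)
    simp only [Int.toNat_natCast] at hm ⊢
    have hb := digit_sum_bounds (fun l => y (J + 1 + l)) K
    have hG := Gf_digits J m hm y K hy
    split_ifs with h1
    · rw [zv_split y K J hy, h1]
      rcases zmod2_cases (y J) with h0 | h0
      · rw [h0, ZMod.val_zero, Gf_left J m hm _ (by push_cast; linarith) (by push_cast; linarith),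
          abs_div, abs_of_pos (by positivity : (0:ℝ) < 2 ^ J)]
        gcongr
        rw [abs_le]; push_cast; constructor <;> linarith
      · rw [h0, show (1:ZMod 2).val = 1 from rfl, Gf_right J m hm _ (by push_cast; linarith) (by push_cast; linarith),
          abs_div, abs_of_pos (by positivity : (0:ℝ) < 2 ^ J)]
        gcongr
        rw [abs_le]; push_cast; constructor <;> linarith
    · rw [hG, if_neg h1]; simp

lemma cf_abs_le (j : ℤ) (hj : -1 ≤ j) (m : ℕ) (hm : m < 2 ^ j.toNat) :
    |cf j m| ≤ 1 / (2 ^ j.toNat * 2 ^ j.toNat) := by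
  rcases hj.eq_or_lt with h | h
  · subst h
    rw [cf_neg, toNat_neg1]; norm_num
  · obtain ⟨J, rfl⟩ := Int.eq_ofNat_of_zero_le (by omega : 0 ≤ j)
    simp only [Int.toNat_natCast] at hm ⊢
    rw [cf_nonneg J m hm, abs_div, abs_of_pos (by positivity : (0:ℝ) < 2 ^ J * 2 ^ J)]
    gcongr
    norm_num

/-- A row of weights is killed by `w`. -/
def Cov (ν e row : ℕ) : Prop := row + 1 < ν ∨ (ν ≠ 0 ∧ row = e)

lemma expansion1 (j : ℤ) (hj : -1 ≤ j) (m : ℕ) (hm : m < 2 ^ j.toNat) (K : ℕ) :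
    ∃ (a : ℕ → ℝ) (χ : ℕ → (ℕ → ZMod 2) → ℝ) (ν e : ℕ → ℕ),
      (∀ y : ℕ → ZMod 2, (∀ i, K ≤ i → y i = 0) → Gf j m (zv y) =
        if pref j.toNat y = m then ∑ l ∈ Finset.range (K + 2), a l * χ l y else 0) ∧
      (∀ y, χ 0 y = 1) ∧ a 0 = cf j m * 2 ^ j.toNat ∧
      (∀ l < K + 2, |a l| ≤ 1 / 2 ^ j.toNat * (1 / 2 ^ l)) ∧ (∀ l y, |χ l y| ≤ 1) ∧
      (∀ l ≤ K, (ν l ≠ 0 → ν l ≤ e l + 1) ∧ (ν l ≠ 0 → e l + ν l ≤ 2 * j.toNat + l + 2) ∧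
        (∀ row < j.toNat, Cov (ν l) (e l) row) ∧
        (∀ y w : ℕ → ZMod 2, (∀ row, Cov (ν l) (e l) row → w row = 0) →
          χ l (y + w) = χ l y) ∧
        (1 ≤ l → ν l ≠ 0 ∧ j.toNat < ν l ∧ j.toNat ≤ e l ∧ (∀ y w : ℕ → ZMod 2, (∀ row, row + 1 < ν l → w row = 0) → w (e l) = 1 →
          χ l (y + w) = - χ l y))) := by
  rcases hj.eq_or_lt with h | h
  · subst h
    have hm0 : m = 0 := by simpa using hm
    refine ⟨fun l => if l = 0 then 1/2 else if l ≤ K then 1 / 2 ^ (l + 1) else 1 / 2 ^ (K + 1),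
      fun l y => if l = 0 then 1 else if l ≤ K then sg (y (l - 1)) else 1,
      fun l => if l = 0 then 0 else 1, fun l => l - 1, ?_, ?_, ?_, ?_, ?_, ?_⟩
    · intro y hy
      rw [Gf_digits_neg m y K hy, Finset.sum_range_succ, Finset.sum_range_succ']
      simp only [toNat_neg1, pref, hm0, if_true]
      have : ∀ l ∈ Finset.range K, ((if l + 1 = 0 then (1/2:ℝ) else if l + 1 ≤ K then 1 / 2 ^ (l + 1 + 1) else 1 / 2 ^ (K + 1)) *
          if l + 1 = 0 then 1 else if l + 1 ≤ K then sg (y (l + 1 - 1)) else 1) = sg (y l) / 2 ^ (l + 2) := by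
        intro l hl
        have : l + 1 ≤ K := by simpa using hl
        simp only [this, if_true, Nat.add_sub_cancel, Nat.succ_ne_zero, if_false]
        ring
      rw [Finset.sum_congr rfl this]
      simp
      ring
    · intro y; simp
    · rw [cf_neg]; simp
    · intro l hl
      simp only [toNat_neg1, pow_zero]
      split_ifs with h1 h2
      · subst h1; rw [abs_of_pos] <;> norm_num
      · rw [abs_of_pos (by positivity), div_one, one_mul]
        exact one_div_le_one_div_of_le (by positivity) (pow_le_pow_right₀ (by norm_num) (by omega))
      · rw [abs_of_pos (by positivity), div_one, one_mul]
        exact one_div_le_one_div_of_le (by positivity) (pow_le_pow_right₀ (by norm_num) (by omega))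
    · intro l y
      dsimp only
      split_ifs
      · simp
      · exact (abs_sg _).le
      · simp
    · intro l hl
      simp only [toNat_neg1, Cov]
      refine ⟨?_, ?_, ?_, ?_, ?_⟩
      · intro _; split_ifs <;> omega
      · intro _; split_ifs <;> omega
      · intro row hrow; omega
      · intro y w hw
        split_ifs with h1
        · rfl
        · simp only [Pi.add_apply]
          rw [hw (l - 1) (Or.inr ⟨by simp [h1], rfl⟩), add_zero]
      · intro h1
        have h2 : l ≠ 0 := by omega
        simp only [h2, if_false]
        refine ⟨one_ne_zero, by omega, by omega, ?_⟩
        intro y w _ hw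
        simp only [hl, if_true, Pi.add_apply, hw, sg_add_one]
  · obtain ⟨J, rfl⟩ := Int.eq_ofNat_of_zero_le (by omega : 0 ≤ j)
    simp only [Int.toNat_natCast] at hm ⊢
    refine ⟨fun l => if l = 0 then -(1/4) / 2 ^ J else if l ≤ K then 1 / 2 ^ (l + 2) / 2 ^ J else 1 / 2 ^ (K + 2) / 2 ^ J,
      fun l y => if l = 0 then 1 else if l ≤ K then sg (y J) * sg (y (J + l)) else sg (y J),
      fun l => if l = 0 then J else J + 2, fun l => if l = 0 then J - 1 else J + l, ?_, ?_, ?_, ?_, ?_, ?_⟩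
    · intro y hy
      rw [Gf_digits J m hm y K hy, Finset.sum_range_succ, Finset.sum_range_succ']
      split_ifs with hp
      · have : ∀ l ∈ Finset.range K, ((if l + 1 = 0 then -(1/4) / 2 ^ J else if l + 1 ≤ K then (1:ℝ) / 2 ^ (l + 1 + 2) / 2 ^ J else 1 / 2 ^ (K + 2) / 2 ^ J) *
          if l + 1 = 0 then 1 else if l + 1 ≤ K then sg (y J) * sg (y (J + (l + 1))) else sg (y J)) = 
          (sg (y J) / 2 ^ J) * (sg (y (J + 1 + l)) / 2 ^ (l + 3)) := by
          intro l hl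
          have : l + 1 ≤ K := by simpa using hl
          simp only [this, if_true, Nat.succ_ne_zero, if_false]
          rw [show J + (l + 1) = J + 1 + l by ring]
          ring
        rw [Finset.sum_congr rfl this, ← Finset.mul_sum]
        simp
        ring
      · rfl
    · intro y; simp
    · rw [cf_nonneg J m hm]; simp; field_simp
    · intro l hl
      have key : ∀ i, l ≤ i → |(1:ℝ) / 2 ^ i / 2 ^ J| ≤ 1 / 2 ^ J * (1 / 2 ^ l) := by
        intro i hi
        rw [abs_of_pos (by positivity), div_eq_mul_one_div, mul_comm]
        gcongr
        norm_num
      dsimp only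
      split_ifs with h1 h2
      · subst h1
        rw [abs_div, abs_of_pos (by positivity : (0:ℝ) < 2 ^ J), pow_zero, div_one, mul_one]
        gcongr
        norm_num
      · exact key _ (by omega)
      · exact key _ (by omega)
    · intro l y
      dsimp only
      split_ifs
      · simp
      · rw [abs_mul, abs_sg, abs_sg]; norm_num
      · exact (abs_sg _).le
    · intro l hl
      simp only [Cov]
      refine ⟨?_, ?_, ?_, ?_, ?_⟩
      · intro _; split_ifs <;> omega
      · intro _; split_ifs <;> omega
      · intro row hrow; split_ifs <;> omega
      · intro y w hw
        split_ifs with h1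
        · rfl
        · simp only [Pi.add_apply]
          simp only [h1, if_false] at hw
          rw [hw J (Or.inl (by omega)), hw (J + l) (Or.inr ⟨by omega, rfl⟩), add_zero, add_zero]
      · intro h1
        have h2 : l ≠ 0 := by omega
        simp only [h2, if_false]
        refine ⟨by omega, by omega, by omega, ?_⟩
        intro y w hw0 hw
        simp only [hl, if_true, Pi.add_apply, hw, sg_add_one]
        rw [hw0 J (by omega), add_zero]
        ring

def Yd (C : ℕ → ℕ → ZMod 2) (k i : ℕ) : ZMod 2 :=
  ∑ ℓ ∈ Finset.range (k+1), C i ℓ * (if k.testBit ℓ then 1 else 0)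

lemma digitalCoord_eq (C : ℕ → ℕ → ZMod 2) (k : ℕ) : digitalCoord C k = zv (Yd C k) := rfl

lemma Yd_eq (C : ℕ → ℕ → ZMod 2) (k i L : ℕ) (h : k < 2 ^ L) :
    Yd C k i = ∑ ℓ ∈ Finset.range L, C i ℓ * (if k.testBit ℓ then 1 else 0) := by
  have key : ∀ A B, k < 2 ^ A → A ≤ B →
      ∑ ℓ ∈ Finset.range A, C i ℓ * (if k.testBit ℓ then 1 else 0) =
      ∑ ℓ ∈ Finset.range B, C i ℓ * (if k.testBit ℓ then 1 else 0) := by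
    intro A B hA hAB
    refine Finset.sum_subset (Finset.range_subset_range.2 hAB) fun ℓ _ hℓ => ?_
    have hℓ' : A ≤ ℓ := by simpa using hℓ
    have : k.testBit ℓ = false :=
      Nat.testBit_lt_two_pow (hA.trans_le (Nat.pow_le_pow_right (by norm_num) hℓ'))
    simp [this]
  have hk : k < 2 ^ (k + 1) := (Nat.lt_succ_self k).trans (Nat.lt_two_pow_self)
  unfold Yd
  rcases le_total (k+1) L with h1 | h1
  · exact key _ _ hk h1
  · exact (key _ _ h h1).symm

lemma Yd_tri (C : ℕ → ℕ → ZMod 2) (hC : ∀ k ℓ, 2 * (ℓ + 1) < k + 1 → C k ℓ = 0) (k i : ℕ)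
    (hi : 2 * k + 2 ≤ i) : Yd C k i = 0 := by
  unfold Yd
  refine Finset.sum_eq_zero fun ℓ hℓ => ?_
  have : ℓ < k + 1 := by simpa using hℓ
  rw [hC i ℓ (by omega), zero_mul]

lemma Yd_xor (C : ℕ → ℕ → ZMod 2) (k r i : ℕ) : Yd C (k ^^^ r) i = Yd C k i + Yd C r i := by
  have hk : k < 2 ^ (k + r) := lt_of_lt_of_le (Nat.lt_two_pow_self) (Nat.pow_le_pow_right (by norm_num) (by omega))
  have hr : r < 2 ^ (k + r) := lt_of_lt_of_le (Nat.lt_two_pow_self) (Nat.pow_le_pow_right (by norm_num) (by omega))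
  rw [Yd_eq C _ i _ (Nat.xor_lt_two_pow hk hr), Yd_eq C _ i _ hk, Yd_eq C _ i _ hr,
    ← Finset.sum_add_distrib]
  refine Finset.sum_congr rfl fun ℓ _ => ?_
  rw [Nat.testBit_xor, ← mul_add]
  congr 1
  cases k.testBit ℓ <;> cases r.testBit ℓ <;> simp
  decide

lemma Yd_block (C : ℕ → ℕ → ZMod 2) (n a r i : ℕ) (hr : r < 2 ^ n) :
    Yd C (2 ^ n * a + r) i = Yd C (2 ^ n * a) i + Yd C r i := by
  rw [← Yd_xor]
  congr 1
  refine Nat.eq_of_testBit_eq fun j => ?_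
  have h0 := Nat.testBit_two_pow_mul_add a (b := 0) (i := n) (by positivity) j
  rw [add_zero] at h0
  rw [Nat.testBit_two_pow_mul_add a hr, Nat.testBit_xor, h0]
  split_ifs with h
  · simp
  · have : r.testBit j = false :=
      Nat.testBit_lt_two_pow (hr.trans_le (Nat.pow_le_pow_right (by norm_num) (by omega)))
    simp [this]

lemma dual_exists {ι : Type*} {n : ℕ} (v : ι → Fin n → ZMod 2) (hv : LinearIndependent (ZMod 2) v)
    (b : ι → ZMod 2) : ∃ x : Fin n → ZMod 2, ∀ i, ∑ ℓ, v i ℓ * x ℓ = b i := by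
  obtain ⟨g, hg⟩ := LinearMap.exists_extend ((Module.Basis.span hv).constr (ZMod 2) b)
  refine ⟨fun ℓ => g (Pi.single ℓ 1), fun i => ?_⟩
  have h1 : g (v i) = b i := by
    have h3 := (Module.Basis.span hv).constr_basis (ZMod 2) b i
    have h2 : g ((Module.Basis.span hv i : _) : Fin n → ZMod 2) =
      (Module.Basis.span hv).constr (ZMod 2) b (Module.Basis.span hv i) := LinearMap.congr_fun hg _
    rw [h3, Module.Basis.span_apply hv i] at h2
    exact h2
  rw [← h1]
  conv_rhs => rw [pi_eq_sum_univ' (v i)]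
  rw [map_sum]
  refine Finset.sum_congr rfl fun ℓ _ => ?_
  rw [map_smul, smul_eq_mul]

lemma bits_exists (n : ℕ) (x : Fin n → ZMod 2) : ∃ r < 2 ^ n, ∀ ℓ : Fin n,
    (if r.testBit ℓ then (1 : ZMod 2) else 0) = x ℓ := by
  refine ⟨Nat.ofBits (fun ℓ => decide (x ℓ = 1)), Nat.ofBits_lt_two_pow _, fun ℓ => ?_⟩
  rw [Nat.testBit_ofBits_lt _ _ ℓ.2]
  rcases zmod2_cases (x ℓ) with h | h <;> simp [h]

lemma sum_top2 (ν e : ℕ) :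
    ∑ l ∈ Finset.univ.filter (fun l : Fin ν => (l:ℕ) < 2), ((if (l:ℕ) = 0 then e else ν - 1 - l) + 1)
      ≤ if ν = 0 then 0 else e + ν := by
  match ν with
  | 0 => simp
  | 1 => simp
  | ν + 2 =>
    rw [Finset.sum_filter, Fin.sum_univ_succ, Fin.sum_univ_succ]
    simp
    omega

def Shifty (d n t : ℕ) (y : Fin (2^n) → Fin d → ℕ → ZMod 2) : Prop :=
  ∀ (ν e : Fin d → ℕ) (b : Fin d → ℕ → ZMod 2), (∀ i, ν i ≠ 0 → ν i ≤ e i + 1) →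
    (∑ i, if ν i = 0 then 0 else e i + ν i) + t ≤ 2 * n →
    ∃ (σ : Equiv.Perm (Fin (2^n))) (w : Fin d → ℕ → ZMod 2),
      (∀ r i, y (σ r) i = y r i + w i) ∧ ∀ i row, Cov (ν i) (e i) row → w i row = b i row

lemma net_exists (d n t : ℕ) (E : Fin d → ℕ → ℕ → ZMod 2) (hE : IsOrderSeq 2 t d E) (ht : t < 2 * n)
    (ν e : Fin d → ℕ) (b : Fin d → ℕ → ZMod 2) (he : ∀ i, ν i ≠ 0 → ν i ≤ e i + 1)
    (hsum : (∑ i, if ν i = 0 then 0 else e i + ν i) + t ≤ 2 * n) :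
    ∃ r < 2 ^ n, ∀ i row, Cov (ν i) (e i) row → Yd (E i) r row = b i row := by
  have hli := hE n ht ν (fun i l => if (l:ℕ) = 0 then e i else ν i - 1 - l) ?_ ?_ ?_
  · obtain ⟨x, hx⟩ := dual_exists _ hli
      (fun p => b p.1 (if (p.2:ℕ) = 0 then e p.1 else ν p.1 - 1 - p.2))
    obtain ⟨r, hr, hrx⟩ := bits_exists n x
    refine ⟨r, hr, fun i row hrow => ?_⟩
    have main : ∀ l : Fin (ν i), row = (if (l:ℕ) = 0 then e i else ν i - 1 - l) →
        Yd (E i) r row = b i row := by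
      intro l hl
      have := hx ⟨i, l⟩
      simp only [← hl] at this
      rw [← this, Yd_eq _ _ _ n hr, Finset.sum_range]
      refine Finset.sum_congr rfl fun ℓ _ => ?_
      rw [hrx]
    rcases hrow with h | ⟨h, h'⟩
    · refine main ⟨ν i - 1 - row, by omega⟩ ?_
      simp only
      split_ifs <;> omega
    · exact main ⟨0, by omega⟩ (by simp [h'])
  · intro i l l' hll
    have h1 : (l:ℕ) < l' := hll
    have h2 := l'.2
    have h3 := he i (by omega)
    simp only
    split_ifs <;> omega
  · intro i l
    have h2 := l.2
    have h3 := he i (by omega)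
    have h4 : (if ν i = 0 then 0 else e i + ν i) ≤ ∑ i, if ν i = 0 then 0 else e i + ν i :=
      Finset.single_le_sum (f := fun i => if ν i = 0 then 0 else e i + ν i) (fun _ _ => Nat.zero_le _) (Finset.mem_univ i)
    rw [if_neg (by omega)] at h4
    split_ifs <;> omega
  · refine (Finset.sum_le_sum fun i _ => sum_top2 (ν i) (e i)).trans ?_
    omega

lemma shifty_block (d n t a : ℕ) (E : Fin d → ℕ → ℕ → ZMod 2) (hE : IsOrderSeq 2 t d E) :
    Shifty d n t (fun r i => Yd (E i) (2 ^ n * a + r)) := by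
  intro ν e b he hsum
  by_cases ht : t < 2 * n
  · obtain ⟨r0, hr0, h⟩ := net_exists d n t E hE ht ν e b he hsum
    have hinv : ∀ r : Fin (2 ^ n), (r : ℕ) ^^^ r0 < 2 ^ n := fun r => Nat.xor_lt_two_pow r.2 hr0
    refine ⟨⟨fun r => ⟨r ^^^ r0, hinv r⟩, fun r => ⟨r ^^^ r0, hinv r⟩, ?_, ?_⟩,
      fun i => Yd (E i) r0, ?_, h⟩
    · intro r; ext; simp
    · intro r; ext; simp
    · intro r i
      funext row
      simp only [Equiv.coe_fn_mk, Pi.add_apply]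
      rw [Yd_block _ _ _ _ _ (hinv r), Yd_block _ _ _ _ _ r.2, Yd_xor, add_assoc]
  · refine ⟨1, 0, by simp, ?_⟩
    intro i row hrow
    exfalso
    have h4 : (if ν i = 0 then 0 else e i + ν i) ≤ ∑ i, if ν i = 0 then 0 else e i + ν i :=
      Finset.single_le_sum (f := fun i => if ν i = 0 then 0 else e i + ν i) (fun _ _ => Nat.zero_le _) (Finset.mem_univ i)
    have h5 : ν i = 0 := by
      by_contra h
      rw [if_neg h] at h4
      omega
    rcases hrow with h | ⟨h, _⟩ <;> omega

lemma pref_inj (y y' : ℕ → ZMod 2) (J : ℕ) (h : pref J y = pref J y') : ∀ i < J, y i = y' i := by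
  induction J with
  | zero => intro i hi; omega
  | succ J ih =>
    rw [pref, pref] at h
    have h1 := val_le_one (y J)
    have h2 := val_le_one (y' J)
    intro i hi
    rcases Nat.lt_succ_iff_lt_or_eq.1 hi with h3 | rfl
    · exact ih (by omega) i h3
    · exact ZMod.val_injective 2 (by omega)

lemma zmod2_add_self (x : ZMod 2) : x + x = 0 := by
  revert x; decide

def cnt (d n : ℕ) (y : Fin (2^n) → Fin d → ℕ → ZMod 2) (J m : Fin d → ℕ) : ℕ :=
  (Finset.univ.filter (fun r => ∀ i, pref (J i) (y r i) = m i)).card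

lemma sum_cnt (d n : ℕ) (y : Fin (2^n) → Fin d → ℕ → ZMod 2) (J : Fin d → ℕ) :
    ∑ m ∈ Fintype.piFinset (fun i => Finset.range (2 ^ J i)), cnt d n y J m = 2 ^ n := by
  have := Finset.card_eq_sum_card_fiberwise (s := (Finset.univ : Finset (Fin (2 ^ n))))
    (t := Fintype.piFinset (fun i => Finset.range (2 ^ J i)))
    (f := fun r i => pref (J i) (y r i)) (by
      intro r _
      simp only [Finset.mem_coe, Fintype.mem_piFinset, Finset.mem_range]
      intro i; exact pref_lt _ _)
  rw [Finset.card_univ, Fintype.card_fin] at this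
  rw [this]
  refine Finset.sum_congr rfl fun m _ => ?_
  unfold cnt
  congr 1
  ext r
  simp [funext_iff]

lemma cnt_le_cnt (d n t : ℕ) (y : Fin (2^n) → Fin d → ℕ → ZMod 2) (hS : Shifty d n t y)
    (J m m' : Fin d → ℕ) (hJ : 2 * ∑ i, J i + t ≤ 2 * n) (hm : ∀ i, m i < 2 ^ J i)
    (hm' : ∀ i, m' i < 2 ^ J i) : cnt d n y J m ≤ cnt d n y J m' := by
  choose b hb using fun i => pref_surj (J i) (m i) (hm i)
  choose b' hb' using fun i => pref_surj (J i) (m' i) (hm' i)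
  obtain ⟨σ, w, h1, h2⟩ := hS J (fun i => J i - 1) (fun i => b i + b' i) (by intro i _; omega) (by
    refine le_trans ?_ hJ
    rw [Finset.mul_sum]
    gcongr with i
    split_ifs <;> omega)
  refine Finset.card_le_card_of_injOn σ ?_ (σ.injective.injOn)
  intro r hr
  simp only [Finset.coe_filter, Finset.mem_univ, true_and, Set.mem_ofPred_eq] at hr ⊢
  intro i
  rw [← hb' i]
  refine pref_congr _ _ _ fun row hrow => ?_
  have h3 := pref_inj _ _ _ ((hr i).trans (hb i).symm) row hrow
  rw [h1, Pi.add_apply, h2 i row, h3, Pi.add_apply, ← add_assoc, zmod2_add_self, zero_add]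
  unfold Cov; omega

lemma cnt_exact (d n t : ℕ) (y : Fin (2^n) → Fin d → ℕ → ZMod 2) (hS : Shifty d n t y)
    (J m : Fin d → ℕ) (hJ : 2 * ∑ i, J i + t ≤ 2 * n) (hm : ∀ i, m i < 2 ^ J i) :
    cnt d n y J m * 2 ^ (∑ i, J i) = 2 ^ n := by
  have hs : ∑ m' ∈ Fintype.piFinset (fun i => Finset.range (2 ^ J i)), cnt d n y J m'
      = ∑ _m' ∈ Fintype.piFinset (fun i => Finset.range (2 ^ J i)), cnt d n y J m := by
    refine Finset.sum_congr rfl fun m' hm' => ?_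
    have : ∀ i, m' i < 2 ^ J i := by simpa using hm'
    exact le_antisymm (cnt_le_cnt d n t y hS J m' m hJ this hm) (cnt_le_cnt d n t y hS J m m' hJ hm this)
  rw [sum_cnt, Finset.sum_const, Fintype.card_piFinset] at hs
  simp only [Finset.card_range, smul_eq_mul] at hs
  rw [Finset.prod_pow_eq_pow_sum, mul_comm] at hs
  exact hs.symm

lemma exists_sub (d : ℕ) (J : Fin d → ℕ) (k' : ℕ) (h : k' ≤ ∑ i, J i) :
    ∃ J' : Fin d → ℕ, (∀ i, J' i ≤ J i) ∧ ∑ i, J' i = k' := by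
  obtain ⟨c, hc⟩ := Nat.exists_eq_add_of_le h
  induction c generalizing k' with
  | zero => exact ⟨J, fun _ => le_rfl, by omega⟩
  | succ c ih =>
    obtain ⟨J', h1, h2⟩ := ih (k' + 1) (by omega) (by omega)
    obtain ⟨i, hi⟩ : ∃ i, J' i ≠ 0 := by
      by_contra hcon
      push Not at hcon
      simp [hcon] at h2
    refine ⟨Function.update J' i (J' i - 1), ?_, ?_⟩
    · intro i'
      by_cases hii : i' = i
      · subst hii
        rw [Function.update_self]
        have := h1 i'
        omega
      · rw [Function.update_of_ne hii]; exact h1 i'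
    · have e1 := Finset.add_sum_erase Finset.univ J' (Finset.mem_univ i)
      rw [Finset.sum_update_of_mem (Finset.mem_univ i), Finset.sdiff_singleton_eq_erase]
      omega

lemma cnt_le_Q (d n t : ℕ) (y : Fin (2^n) → Fin d → ℕ → ZMod 2) (hS : Shifty d n t y)
    (J m : Fin d → ℕ) (hJ : 2 * n ≤ 2 * ∑ i, J i + t) :
    cnt d n y J m ≤ 2 ^ ((t + 1) / 2) := by
  by_cases h : n ≤ (t + 1) / 2
  · refine le_trans ?_ (Nat.pow_le_pow_right (by norm_num) h)
    exact (Finset.card_le_univ _).trans (by simp)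
  · obtain ⟨J', h1, h2⟩ := exists_sub d J (n - (t+1)/2) (by omega)
    by_cases hne : (Finset.univ.filter (fun r => ∀ i, pref (J i) (y r i) = m i)).Nonempty
    · obtain ⟨r0, hr0⟩ := hne
      simp only [Finset.mem_filter, Finset.mem_univ, true_and] at hr0
      have h3 := cnt_exact d n t y hS J' (fun i => pref (J' i) (y r0 i)) (by omega) (fun i => pref_lt _ _)
      have h4 : cnt d n y J m ≤ cnt d n y J' (fun i => pref (J' i) (y r0 i)) := by
        refine Finset.card_le_card fun r hr => ?_
        simp only [Finset.mem_filter, Finset.mem_univ, true_and] at hr ⊢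
        intro i
        exact pref_mono_le _ _ (J i) (J' i) (h1 i) ((hr i).trans (hr0 i).symm)
      refine h4.trans ?_
      have h5 : 2 ^ n = 2 ^ ((t+1)/2) * 2 ^ (∑ i, J' i) := by
        rw [← pow_add]; congr 1; omega
      rw [h5] at h3
      exact (Nat.eq_of_mul_eq_mul_right (by positivity) h3).le
    · rw [Finset.not_nonempty_iff_eq_empty] at hne
      unfold cnt; rw [hne]; simp

def rho : ℝ := (2:ℝ) ^ (-(1/4) : ℝ)

lemma rho_pos : 0 < rho := by unfold rho; positivity
lemma rho_lt : rho < 1 := Real.rpow_lt_one_of_one_lt_of_neg (by norm_num) (by norm_num)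

lemma rho_pow (l : ℕ) : rho ^ l = (2:ℝ) ^ (-(l:ℝ)/4) := by
  unfold rho
  rw [← Real.rpow_natCast, ← Real.rpow_mul (by norm_num)]
  congr 1; ring

lemma half_pow (l : ℕ) : (1:ℝ) / 2 ^ l = (2:ℝ) ^ (-(l:ℝ)) := by
  rw [Real.rpow_neg (by norm_num), Real.rpow_natCast, one_div]

def Cd (d : ℕ) : ℝ := (2:ℝ) ^ ((3/2) * (d:ℝ)) * (1 / (1 - rho)) ^ d

lemma Cd_pos (d : ℕ) : 0 < Cd d := by
  have := rho_lt
  unfold Cd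
  have : 0 < 1 - rho := by linarith
  positivity

lemma T_zero (d n t K : ℕ) (y : Fin (2^n) → Fin d → ℕ → ZMod 2) (hS : Shifty d n t y)
    (J m l : Fin d → ℕ) (χ : Fin d → ℕ → (ℕ → ZMod 2) → ℝ) (ν e : Fin d → ℕ → ℕ)
    (hχ : ∀ i, ∀ l ≤ K, (ν i l ≠ 0 → ν i l ≤ e i l + 1) ∧ (ν i l ≠ 0 → e i l + ν i l ≤ 2 * J i + l + 2) ∧
        (∀ row < J i, Cov (ν i l) (e i l) row) ∧
        (∀ y w : ℕ → ZMod 2, (∀ row, Cov (ν i l) (e i l) row → w row = 0) →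
          χ i l (y + w) = χ i l y) ∧
        (1 ≤ l → ν i l ≠ 0 ∧ J i < ν i l ∧ J i ≤ e i l ∧ (∀ y w : ℕ → ZMod 2, (∀ row, row + 1 < ν i l → w row = 0) → w (e i l) = 1 →
          χ i l (y + w) = - χ i l y)))
    (hl : ∀ i, l i ≤ K) (hl0 : l ≠ 0) (hsum : 2 * ∑ i, J i + ∑ i, l i + 2 * d + t ≤ 2 * n) :
    ∑ r, (if ∀ i, pref (J i) (y r i) = m i then ∏ i, χ i (l i) (y r i) else 0) = 0 := by
  obtain ⟨i0, hi0⟩ : ∃ i, l i ≠ 0 := by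
    by_contra hcon
    push Not at hcon
    exact hl0 (funext hcon)
  obtain ⟨σ, w, h1, h2⟩ := hS (fun i => ν i (l i)) (fun i => e i (l i))
    (fun i row => if i = i0 ∧ row = e i (l i) then 1 else 0) (fun i => (hχ i (l i) (hl i)).1) (by
      refine le_trans ?_ hsum
      gcongr
      calc _ ≤ ∑ i : Fin d, (2 * J i + l i + 2) := by
            gcongr with i
            have := (hχ i (l i) (hl i)).2.1
            split_ifs with h
            · omega
            · exact this h
        _ = _ := by
            rw [Finset.sum_add_distrib, Finset.sum_add_distrib, Finset.mul_sum]
            simp [mul_comm])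
  obtain ⟨f1, f2, f3, f4⟩ := (hχ i0 (l i0) (hl i0)).2.2.2.2 (by omega)
  have f5 := (hχ i0 (l i0) (hl i0)).1 f1
  have hpref : ∀ r i, pref (J i) (y (σ r) i) = pref (J i) (y r i) := by
    intro r i
    refine pref_congr _ _ _ fun row hrow => ?_
    rw [h1, Pi.add_apply, h2 i row ((hχ i (l i) (hl i)).2.2.1 row hrow), if_neg, add_zero]
    rintro ⟨rfl, h⟩
    omega
  have hchi : ∀ r i, χ i (l i) (y (σ r) i) = (if i = i0 then -1 else 1) * χ i (l i) (y r i) := by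
    intro r i
    rw [h1]
    split_ifs with h
    · subst h
      rw [f4]
      · ring
      · intro row hrow
        rw [h2 i row (Or.inl hrow), if_neg]
        omega
      · rw [h2 i _ (Or.inr ⟨f1, rfl⟩), if_pos ⟨rfl, rfl⟩]
    · rw [one_mul]
      refine (hχ i (l i) (hl i)).2.2.2.1 _ _ fun row hrow => ?_
      rw [h2 i row hrow, if_neg]
      exact fun hh => h hh.1
  have key : ∑ r, (if ∀ i, pref (J i) (y r i) = m i then ∏ i, χ i (l i) (y r i) else 0) =
      - ∑ r, (if ∀ i, pref (J i) (y r i) = m i then ∏ i, χ i (l i) (y r i) else 0) := by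
    conv_lhs => rw [← Equiv.sum_comp σ]
    rw [← Finset.sum_neg_distrib]
    refine Finset.sum_congr rfl fun r _ => ?_
    simp only [hpref, hchi, Finset.prod_mul_distrib]
    rw [Finset.prod_ite_eq' Finset.univ i0 (fun _ => (-1:ℝ))]
    split_ifs <;> simp_all
  linarith

lemma block_regime1 (d n t K : ℕ) (y : Fin (2^n) → Fin d → ℕ → ZMod 2) (hS : Shifty d n t y)
    (hy : ∀ r i row, K ≤ row → y r i row = 0) (hK : 2 * n ≤ K)
    (j : Fin d → ℤ) (hj : ∀ i, -1 ≤ j i) (m : Fin d → ℕ) (hm : ∀ i, m i < 2 ^ (j i).toNat)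
    (hJ : 2 * ∑ i, (j i).toNat + t ≤ 2 * n) :
    |∑ r, (∏ i, Gf (j i) (m i) (zv (y r i)) - ∏ i, cf (j i) (m i))| ≤
      Cd d * (2:ℝ) ^ ((n:ℝ) - 2 * (∑ i, (j i).toNat : ℕ) -
        (3/4) * (2 * n - t - 2 * (∑ i, (j i).toNat : ℕ))) := by
  choose a χ ν e h1 h2 h3 h4 h5 h6 using fun i => expansion1 (j i) (hj i) (m i) (hm i) K
  set J : Fin d → ℕ := fun i => (j i).toNat with hJdef
  set k := ∑ i, (j i).toNat with hk
  set L := Fintype.piFinset (fun _ : Fin d => Finset.range (K + 2)) with hL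
  set T : (Fin d → ℕ) → ℝ := fun l =>
    ∑ r, (if ∀ i, pref (J i) (y r i) = m i then ∏ i, χ i (l i) (y r i) else 0) with hT
  have hcnt := cnt_exact d n t y hS J m hJ hm
  have hcR : (cnt d n y J m : ℝ) * 2 ^ k = 2 ^ n := by exact_mod_cast hcnt
  have hcR' : (cnt d n y J m : ℝ) = (2:ℝ) ^ ((n:ℝ) - k) := by
    rw [Real.rpow_sub (by norm_num), Real.rpow_natCast, Real.rpow_natCast, ← hcR]
    field_simp
  have hexp : ∑ r, ∏ i, Gf (j i) (m i) (zv (y r i)) = ∑ l ∈ L, (∏ i, a i (l i)) * T l := by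
    simp only [hT, Finset.mul_sum]
    rw [Finset.sum_comm]
    refine Finset.sum_congr rfl fun r _ => ?_
    have : ∀ i, Gf (j i) (m i) (zv (y r i)) = if pref (J i) (y r i) = m i then
        ∑ l ∈ Finset.range (K + 2), a i l * χ i l (y r i) else 0 := fun i => h1 i _ (hy r i)
    simp only [this]
    by_cases hb : ∀ i, pref (J i) (y r i) = m i
    · simp only [hb, if_true, implies_true]
      rw [Finset.prod_univ_sum]
      refine Finset.sum_congr rfl fun l _ => ?_
      rw [Finset.prod_mul_distrib]
    · simp only [hb, if_false, mul_zero, Finset.sum_const_zero]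
      push Not at hb
      obtain ⟨i, hi⟩ := hb
      exact Finset.prod_eq_zero (Finset.mem_univ i) (by rw [if_neg hi])
  have hT0 : T 0 = cnt d n y J m := by
    simp only [hT, Pi.zero_apply, h2, Finset.prod_const_one]
    unfold cnt
    rw [Finset.card_filter]
    push_cast
    rfl
  have hTle : ∀ l, |T l| ≤ cnt d n y J m := by
    intro l
    unfold cnt
    rw [Finset.card_filter]
    push_cast
    refine (Finset.abs_sum_le_sum_abs _ _).trans (Finset.sum_le_sum fun r _ => ?_)
    split_ifs
    · rw [Finset.abs_prod]
      exact Finset.prod_le_one (fun i _ => abs_nonneg _) (fun i _ => h5 i _ _)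
    · simp
  have h0L : (0 : Fin d → ℕ) ∈ L := by simp [hL]
  have hmain0 : (∏ i, a i ((0 : Fin d → ℕ) i)) * T 0 = 2 ^ n * ∏ i, cf (j i) (m i) := by
    simp only [Pi.zero_apply, h3, Finset.prod_mul_distrib]
    rw [hT0, Finset.prod_pow_eq_pow_sum, ← hcR]
    ring
  have herr : ∑ r : Fin (2^n), (∏ i, Gf (j i) (m i) (zv (y r i)) - ∏ i, cf (j i) (m i)) =
      ∑ l ∈ L.erase 0, (∏ i, a i (l i)) * T l := by
    rw [Finset.sum_sub_distrib, hexp, ← Finset.add_sum_erase _ _ h0L, hmain0]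
    simp
  rw [herr]
  have hterm : ∀ l ∈ L.erase 0, |(∏ i, a i (l i)) * T l| ≤
      (2:ℝ) ^ ((n:ℝ) - 2 * k - (3/4) * (2 * n - t - 2 * k - 2 * d)) * ∏ i, rho ^ (l i) := by
    intro l hl
    rw [Finset.mem_erase] at hl
    have hlK : ∀ i, l i < K + 2 := by simpa [hL] using hl.2
    by_cases hs : 2 * ∑ i, J i + ∑ i, l i + 2 * d + t ≤ 2 * n
    · have hlK' : ∀ i, l i ≤ K := by
        intro i
        have := Finset.single_le_sum (f := l) (fun _ _ => Nat.zero_le _) (Finset.mem_univ i)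
        omega
      have : T l = 0 := T_zero d n t K y hS J m l χ ν e h6 hlK' hl.1 hs
      rw [this, mul_zero, abs_zero]
      have := rho_pos
      positivity
    · push Not at hs
      rw [abs_mul, Finset.abs_prod]
      have ha : ∏ i, |a i (l i)| ≤ (2:ℝ) ^ (-(k:ℝ) - (∑ i, l i : ℕ)) := by
        calc ∏ i, |a i (l i)| ≤ ∏ i, (1 / 2 ^ (J i) * (1 / 2 ^ (l i)) : ℝ) :=
              Finset.prod_le_prod (fun i _ => abs_nonneg _) (fun i _ => h4 i _ (hlK i))
          _ = _ := by
              rw [Finset.prod_mul_distrib, Finset.prod_div_distrib, Finset.prod_div_distrib,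
                Finset.prod_pow_eq_pow_sum, Finset.prod_pow_eq_pow_sum, Finset.prod_const_one,
                half_pow, half_pow, ← Real.rpow_add (by norm_num)]
              rfl
      calc _ ≤ (2:ℝ) ^ (-(k:ℝ) - (∑ i, l i : ℕ)) * (2:ℝ) ^ ((n:ℝ) - k) := by
            rw [← hcR']
            exact mul_le_mul ha (hTle l) (abs_nonneg _) (by positivity)
        _ ≤ _ := by
            rw [Finset.prod_pow_eq_pow_sum, rho_pow, ← Real.rpow_add (by norm_num), ← Real.rpow_add (by norm_num)]
            refine Real.rpow_le_rpow_of_exponent_le (by norm_num) ?_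
            have hs' : (2:ℝ) * n ≤ 2 * k + (∑ i, l i : ℕ) + 2 * d + t := by
              exact_mod_cast hs.le
            linarith
  calc _ ≤ ∑ l ∈ L.erase 0, |(∏ i, a i (l i)) * T l| := Finset.abs_sum_le_sum_abs _ _
    _ ≤ ∑ l ∈ L.erase 0, (2:ℝ) ^ ((n:ℝ) - 2 * k - (3/4) * (2 * n - t - 2 * k - 2 * d)) * ∏ i, rho ^ (l i) :=
        Finset.sum_le_sum hterm
    _ ≤ ∑ l ∈ L, (2:ℝ) ^ ((n:ℝ) - 2 * k - (3/4) * (2 * n - t - 2 * k - 2 * d)) * ∏ i, rho ^ (l i) := by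
        refine Finset.sum_le_sum_of_subset_of_nonneg (Finset.erase_subset _ _) fun l _ _ => ?_
        have := rho_pos
        positivity
    _ = (2:ℝ) ^ ((n:ℝ) - 2 * k - (3/4) * (2 * n - t - 2 * k - 2 * d)) *
        ∏ i : Fin d, ∑ l ∈ Finset.range (K + 2), rho ^ l := by
        rw [Finset.prod_univ_sum, ← Finset.mul_sum]
    _ ≤ (2:ℝ) ^ ((n:ℝ) - 2 * k - (3/4) * (2 * n - t - 2 * k - 2 * d)) * (1 / (1 - rho)) ^ d := by
        gcongr
        calc _ ≤ ∏ i : Fin d, (1 / (1 - rho)) := by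
              refine Finset.prod_le_prod (fun i _ => Finset.sum_nonneg fun l _ => pow_nonneg rho_pos.le _) fun i _ => ?_
              rw [one_div, ← tsum_geometric_of_lt_one rho_pos.le rho_lt]
              exact (summable_geometric_of_lt_one rho_pos.le rho_lt).sum_le_tsum _ (fun l _ => pow_nonneg rho_pos.le _)
          _ = _ := by simp
    _ = _ := by
        unfold Cd
        rw [mul_right_comm, ← Real.rpow_add (by norm_num)]
        congr 2
        ring

/-- The `ℓ^p` norm over a finite set. -/
def np {ι : Type*} (p : ℝ) (s : Finset ι) (f : ι → ℝ) : ℝ := (∑ m ∈ s, |f m| ^ p) ^ (1 / p)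

lemma np_nonneg {ι : Type*} (p : ℝ) (s : Finset ι) (f : ι → ℝ) : 0 ≤ np p s f := by
  unfold np; positivity

lemma np_mono {ι : Type*} (p : ℝ) (hp : 1 ≤ p) (s : Finset ι) (f g : ι → ℝ)
    (h : ∀ m ∈ s, |f m| ≤ g m) : np p s f ≤ np p s g := by
  unfold np
  refine Real.rpow_le_rpow (by positivity) ?_ (by positivity)
  refine Finset.sum_le_sum fun m hm => ?_
  exact Real.rpow_le_rpow (abs_nonneg _) ((h m hm).trans (le_abs_self _)) (by linarith)

lemma np_add {ι : Type*} (p : ℝ) (hp : 1 ≤ p) (s : Finset ι) (f g : ι → ℝ) :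
    np p s (fun m => f m + g m) ≤ np p s f + np p s g := Real.Lp_add_le s f g hp

lemma np_zero {ι : Type*} (p : ℝ) (hp : 1 ≤ p) (s : Finset ι) : np p s (fun _ => 0) = 0 := by
  unfold np
  have : p ≠ 0 := by linarith
  simp [Real.zero_rpow this, this]

lemma np_sum {ι κ : Type*} (p : ℝ) (hp : 1 ≤ p) (s : Finset ι) (T : Finset κ) (f : κ → ι → ℝ) :
    np p s (fun m => ∑ n ∈ T, f n m) ≤ ∑ n ∈ T, np p s (f n) := by
  classical
  induction T using Finset.induction_on with
  | empty => simp [np_zero p hp]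
  | insert a T ha ih =>
    simp only [Finset.sum_insert ha]
    exact (np_add p hp s _ _).trans (by gcongr)

lemma np_smul {ι : Type*} (p : ℝ) (hp : 1 ≤ p) (s : Finset ι) (c : ℝ) (hc : 0 ≤ c) (f : ι → ℝ) :
    np p s (fun m => c * f m) = c * np p s f := by
  unfold np
  have : p ≠ 0 := by linarith
  simp only [abs_mul, abs_of_nonneg hc]
  rw [Finset.sum_congr rfl (fun m _ => Real.mul_rpow hc (abs_nonneg (f m))), ← Finset.mul_sum,
    Real.mul_rpow (by positivity) (by positivity), ← Real.rpow_mul hc, mul_one_div_cancel this,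
    Real.rpow_one]

lemma np_const {ι : Type*} (p : ℝ) (hp : 1 ≤ p) (s : Finset ι) (k : ℕ) (hs : s.card = 2 ^ k) (B : ℝ)
    (hB : 0 ≤ B) : np p s (fun _ => B) = B * (2:ℝ) ^ ((k:ℝ) / p) := by
  unfold np
  have hp0 : p ≠ 0 := by linarith
  rw [Finset.sum_const, hs, nsmul_eq_mul, abs_of_nonneg hB, Real.mul_rpow (by positivity) (by positivity),
    ← Real.rpow_mul hB, mul_one_div_cancel hp0, Real.rpow_one, mul_comm]
  push_cast
  rw [← Real.rpow_natCast, ← Real.rpow_mul (by norm_num), mul_one_div]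

lemma card_Dfin (d : ℕ) (j : Fin d → ℤ) : (Dfin d j).card = 2 ^ jnorm d j := by
  unfold Dfin jnorm
  rw [Fintype.card_piFinset]
  simp only [Finset.card_range]
  rw [Finset.prod_pow_eq_pow_sum]

lemma np_cnt (d n t : ℕ) (p : ℝ) (hp : 1 ≤ p) (y : Fin (2^n) → Fin d → ℕ → ZMod 2)
    (hS : Shifty d n t y) (j : Fin d → ℤ) (hJ : 2 * n ≤ 2 * jnorm d j + t) :
    np p (Dfin d j) (fun m => (cnt d n y (fun i => (j i).toNat) m : ℝ)) ≤
      2 * (2:ℝ) ^ ((t:ℝ) / 2) * (2:ℝ) ^ ((n:ℝ) / p) := by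
  have hp0 : p ≠ 0 := by linarith
  have hQ : ((2 ^ ((t+1)/2) : ℕ) : ℝ) ≤ 2 * (2:ℝ) ^ ((t:ℝ) / 2) := by
    push_cast
    rw [← Real.rpow_natCast]
    calc (2:ℝ) ^ (((t+1)/2 : ℕ) : ℝ) ≤ (2:ℝ) ^ (1 + (t:ℝ)/2) := by
          refine Real.rpow_le_rpow_of_exponent_le (by norm_num) ?_
          have : (((t+1)/2 : ℕ) : ℝ) ≤ ((t+1 : ℕ) : ℝ) / 2 := Nat.cast_div_le
          push_cast at this
          linarith
      _ = _ := by rw [Real.rpow_add (by norm_num), Real.rpow_one]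
  set Q : ℝ := 2 * (2:ℝ) ^ ((t:ℝ) / 2) with hQd
  have hQ0 : 0 ≤ Q := by positivity
  have h1 : ∑ m ∈ Dfin d j, |(cnt d n y (fun i => (j i).toNat) m : ℝ)| ^ p ≤ Q ^ p * 2 ^ n := by
    have hs : ∑ m ∈ Dfin d j, (cnt d n y (fun i => (j i).toNat) m : ℝ) = 2 ^ n := by
      exact_mod_cast sum_cnt d n y (fun i => (j i).toNat)
    rw [← hs, Finset.mul_sum]
    refine Finset.sum_le_sum fun m _ => ?_
    rw [abs_of_nonneg (by positivity)]
    have hc := cnt_le_Q d n t y hS (fun i => (j i).toNat) m hJ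
    rcases Nat.eq_zero_or_pos (cnt d n y (fun i => (j i).toNat) m) with h0 | h0
    · rw [h0]; simp [Real.zero_rpow hp0]
    · have h1 : (1:ℝ) ≤ cnt d n y (fun i => (j i).toNat) m := by exact_mod_cast h0
      have h2 : (cnt d n y (fun i => (j i).toNat) m : ℝ) ≤ Q := le_trans (by exact_mod_cast hc) hQ
      calc (cnt d n y (fun i => (j i).toNat) m : ℝ) ^ p ≤ Q ^ p :=
            Real.rpow_le_rpow (by positivity) h2 (by linarith)
        _ ≤ _ := le_mul_of_one_le_right (by positivity) h1
  unfold np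
  calc (∑ m ∈ Dfin d j, |(cnt d n y (fun i => (j i).toNat) m : ℝ)| ^ p) ^ (1/p)
      ≤ (Q ^ p * 2 ^ n) ^ (1/p) := Real.rpow_le_rpow (by positivity) h1 (by positivity)
    _ = Q * (2:ℝ) ^ ((n:ℝ) / p) := by
      rw [Real.mul_rpow (by positivity) (by positivity), ← Real.rpow_mul hQ0, mul_one_div_cancel hp0,
        Real.rpow_one, ← Real.rpow_natCast, ← Real.rpow_mul (by norm_num), mul_one_div]

/-- The block sums. -/
def Abk (d n : ℕ) (y : Fin (2^n) → Fin d → ℕ → ZMod 2) (j : Fin d → ℤ) (m : Fin d → ℕ) : ℝ :=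
  ∑ r, (∏ i, Gf (j i) (m i) (zv (y r i)) - ∏ i, cf (j i) (m i))

lemma mem_Dfin (d : ℕ) (j : Fin d → ℤ) (m : Fin d → ℕ) :
    m ∈ Dfin d j ↔ ∀ i, m i < 2 ^ (j i).toNat := by simp [Dfin]

lemma Ab_crude (d n K : ℕ) (y : Fin (2^n) → Fin d → ℕ → ZMod 2)
    (hy : ∀ r i row, K ≤ row → y r i row = 0)
    (j : Fin d → ℤ) (hj : ∀ i, -1 ≤ j i) (m : Fin d → ℕ) (hm : ∀ i, m i < 2 ^ (j i).toNat) :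
    |Abk d n y j m| ≤ (1 / 2 ^ jnorm d j) * (cnt d n y (fun i => (j i).toNat) m : ℝ)
      + 2 ^ n * (1 / (2 ^ jnorm d j * 2 ^ jnorm d j)) := by
  have hG : ∀ r, |∏ i, Gf (j i) (m i) (zv (y r i))| ≤
      if (∀ i, pref (j i).toNat (y r i) = m i) then 1 / 2 ^ jnorm d j else 0 := by
    intro r
    rw [Finset.abs_prod]
    have hb := fun i => Gf_abs_le (j i) (hj i) (m i) (hm i) (y r i) K (hy r i)
    split_ifs with h
    · refine (Finset.prod_le_prod (fun i _ => abs_nonneg _) (fun i _ => hb i)).trans ?_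
      simp only [h, if_true]
      unfold jnorm
      rw [Finset.prod_div_distrib, Finset.prod_const_one, Finset.prod_pow_eq_pow_sum]
    · push Not at h
      obtain ⟨i, hi⟩ := h
      refine le_of_eq (Finset.prod_eq_zero (Finset.mem_univ i) ?_)
      have := hb i
      rw [if_neg hi] at this
      exact le_antisymm this (abs_nonneg _)
  have hc : |∏ i, cf (j i) (m i)| ≤ 1 / (2 ^ jnorm d j * 2 ^ jnorm d j) := by
    rw [Finset.abs_prod]
    refine (Finset.prod_le_prod (fun i _ => abs_nonneg _) (fun i _ => cf_abs_le (j i) (hj i) (m i) (hm i))).trans ?_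
    unfold jnorm
    rw [Finset.prod_div_distrib, Finset.prod_const_one, Finset.prod_mul_distrib, Finset.prod_pow_eq_pow_sum]
  unfold Abk
  refine (Finset.abs_sum_le_sum_abs _ _).trans ?_
  calc ∑ r, |∏ i, Gf (j i) (m i) (zv (y r i)) - ∏ i, cf (j i) (m i)|
      ≤ ∑ r : Fin (2^n), ((if (∀ i, pref (j i).toNat (y r i) = m i) then 1 / 2 ^ jnorm d j else 0)
        + 1 / (2 ^ jnorm d j * 2 ^ jnorm d j) : ℝ) := by
        refine Finset.sum_le_sum fun r _ => ?_
        exact (abs_sub _ _).trans (add_le_add (hG r) hc)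
    _ = _ := by
      rw [Finset.sum_add_distrib, ← Finset.sum_filter, Finset.sum_const, Finset.sum_const]
      simp only [nsmul_eq_mul, Finset.card_univ, Fintype.card_fin]
      unfold cnt
      push_cast
      ring

lemma np_Ab2 (d n t K : ℕ) (p : ℝ) (hp : 1 ≤ p) (y : Fin (2^n) → Fin d → ℕ → ZMod 2)
    (hS : Shifty d n t y) (hy : ∀ r i row, K ≤ row → y r i row = 0)
    (j : Fin d → ℤ) (hj : ∀ i, -1 ≤ j i) (hJ : 2 * n ≤ 2 * jnorm d j + t) :
    np p (Dfin d j) (Abk d n y j) ≤ 2 * (2:ℝ) ^ ((t:ℝ)/2 - jnorm d j + n / p)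
      + (2:ℝ) ^ ((jnorm d j : ℝ) / p + n - 2 * jnorm d j) := by
  have h1 := np_mono p hp (Dfin d j) (Abk d n y j) _
    (fun m hm => Ab_crude d n K y hy j hj m ((mem_Dfin d j m).1 hm))
  refine h1.trans ((np_add p hp _ _ _).trans ?_)
  rw [np_smul p hp _ _ (by positivity), np_const p hp _ _ (card_Dfin d j) _ (by positivity)]
  refine add_le_add ?_ (le_of_eq ?_)
  · refine (mul_le_mul_of_nonneg_left (np_cnt d n t p hp y hS j hJ) (by positivity)).trans (le_of_eq ?_)
    rw [Real.rpow_add (by norm_num), Real.rpow_sub (by norm_num), Real.rpow_natCast]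
    ring
  · rw [show (jnorm d j : ℝ) / p + n - 2 * jnorm d j = (jnorm d j : ℝ) / p + n - jnorm d j - jnorm d j by ring,
      Real.rpow_sub (by norm_num), Real.rpow_sub (by norm_num), Real.rpow_add (by norm_num),
      Real.rpow_natCast, Real.rpow_natCast]
    field_simp

lemma np_Ab1 (d n t K : ℕ) (p : ℝ) (hp : 1 ≤ p) (y : Fin (2^n) → Fin d → ℕ → ZMod 2)
    (hS : Shifty d n t y) (hy : ∀ r i row, K ≤ row → y r i row = 0) (hK : 2 * n ≤ K)
    (j : Fin d → ℤ) (hj : ∀ i, -1 ≤ j i) (hJ : 2 * jnorm d j + t ≤ 2 * n) :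
    np p (Dfin d j) (Abk d n y j) ≤ Cd d * (2:ℝ) ^ ((jnorm d j : ℝ) / p + n - 2 * jnorm d j
      - (3/4) * (2 * n - t - 2 * jnorm d j)) := by
  have h1 := np_mono p hp (Dfin d j) (Abk d n y j) (fun _ => Cd d * (2:ℝ) ^ ((n:ℝ) - 2 * jnorm d j
      - (3/4) * (2 * n - t - 2 * jnorm d j)))
    (fun m hm => block_regime1 d n t K y hS hy hK j hj m ((mem_Dfin d j m).1 hm) hJ)
  have := Cd_pos d
  refine h1.trans ?_
  rw [np_const p hp _ _ (card_Dfin d j) _ (by positivity), mul_assoc, ← Real.rpow_add (by norm_num)]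
  refine le_of_eq ?_
  congr 2; ring

/-- The centre of the geometric decay. -/
def xc (nb k t : ℕ) : ℝ := if k ≤ nb then (k:ℝ) + t / 2 else nb

lemma two_rpow_le {a b : ℝ} (h : a ≤ b) : (2:ℝ) ^ a ≤ (2:ℝ) ^ b :=
  Real.rpow_le_rpow_of_exponent_le (by norm_num) h

lemma np_Ab (d n nb t K : ℕ) (hn : n ≤ nb) (p : ℝ) (hp : 1 ≤ p) (y : Fin (2^n) → Fin d → ℕ → ZMod 2)
    (hS : Shifty d n t y) (hy : ∀ r i row, K ≤ row → y r i row = 0) (hK : 2 * n ≤ K)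
    (j : Fin d → ℤ) (hj : ∀ i, -1 ≤ j i) :
    np p (Dfin d j) (Abk d n y j) ≤ (Cd d + 3) *
      ((2:ℝ) ^ ((t:ℝ) - jnorm d j + (min nb (jnorm d j) : ℕ) / p) *
       (2:ℝ) ^ (-(1/(2*p)) * |(n:ℝ) - xc nb (jnorm d j) t|)) := by
  have hC := Cd_pos d
  rw [← Real.rpow_add (by norm_num)]
  set k := jnorm d j with hk
  have hp0 : 0 < p := by linarith
  have hp1 : 1 / p ≤ 1 := by rw [div_le_one hp0]; exact hp
  have hpi : 0 < 1 / p := by positivity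
  set u := 1 / p with hu
  have e1 : ∀ a : ℝ, a / p = a * u := fun a => by rw [hu]; ring
  have e2 : 1 / (2 * p) = u / 2 := by rw [hu]; field_simp
  have hnR : (n:ℝ) ≤ nb := by exact_mod_cast hn
  have ht0 : (0:ℝ) ≤ t := by positivity
  by_cases hr : 2 * n ≤ 2 * k + t
  · have hrR : 2 * (n:ℝ) ≤ 2 * k + t := by exact_mod_cast hr
    have h2 := np_Ab2 d n t K p hp y hS hy j hj hr
    have key : ∀ E : ℝ, (t:ℝ)/2 - k + n / p ≤ E → (k : ℝ) / p + n - 2 * k ≤ E →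
        np p (Dfin d j) (Abk d n y j) ≤ (Cd d + 3) * (2:ℝ) ^ E := by
      intro E h3 h4
      have h5 := two_rpow_le h3
      have h6 := two_rpow_le h4
      have h7 : 0 < (2:ℝ) ^ E := by positivity
      rw [← hk] at h2
      nlinarith
    apply key
    all_goals
      rw [e1, e1, e2]
      unfold xc
      split_ifs with hkn
      · rw [min_eq_right hkn, abs_of_nonpos (by linarith)]
        nlinarith
      · have hkn' : (nb:ℝ) ≤ k := by exact_mod_cast (by omega : nb ≤ k)
        rw [min_eq_left (by omega), abs_of_nonpos (by linarith)]
        nlinarith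
  · have hrR : 2 * (k:ℝ) + t ≤ 2 * n := by exact_mod_cast (by omega : 2 * k + t ≤ 2 * n)
    have h2 := np_Ab1 d n t K p hp y hS hy hK j hj (by omega)
    refine h2.trans (mul_le_mul (by linarith) (two_rpow_le ?_) (by positivity) (by positivity))
    have hkn : k ≤ nb := by omega
    unfold xc
    rw [if_pos hkn, min_eq_right hkn, abs_of_nonneg (by linarith), e1, e2]
    rw [← hk]
    nlinarith

lemma block_step (f : ℕ → ℝ) (N n : ℕ) :
    ∑ k ∈ Finset.range (2 ^ n * (N / 2 ^ n)), f k
      - ∑ k ∈ Finset.range (2 ^ (n+1) * (N / 2 ^ (n+1))), f k =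
    if (N / 2 ^ n) % 2 = 1 then
      ∑ r : Fin (2 ^ n), f (2 ^ n * (2 * (N / 2 ^ (n+1))) + r) else 0 := by
  have h1 : N / 2 ^ (n+1) = N / 2 ^ n / 2 := by rw [pow_succ, Nat.div_div_eq_div_mul]
  rw [h1]
  set M := N / 2 ^ n
  split_ifs with h
  · have h2 : 2 ^ n * M = 2 ^ (n+1) * (M / 2) + 2 ^ n := by
      have : M = 2 * (M / 2) + 1 := by omega
      calc 2 ^ n * M = 2 ^ n * (2 * (M / 2) + 1) := by rw [← this]
        _ = _ := by ring
    rw [h2, Finset.sum_range_add, add_sub_cancel_left, Finset.sum_range]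
    refine Finset.sum_congr rfl fun r _ => ?_
    congr 1; ring
  · have h2 : 2 ^ n * M = 2 ^ (n+1) * (M / 2) := by
      have : M = 2 * (M / 2) := by omega
      calc 2 ^ n * M = 2 ^ n * (2 * (M / 2)) := by rw [← this]
        _ = _ := by ring
    rw [h2, sub_self]

lemma block_decomp (f : ℕ → ℝ) (N : ℕ) :
    ∑ k ∈ Finset.range N, f k = ∑ n ∈ Finset.range (Nat.log 2 N + 1),
      if (N / 2 ^ n) % 2 = 1 then
        ∑ r : Fin (2 ^ n), f (2 ^ n * (2 * (N / 2 ^ (n+1))) + r) else 0 := by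
  have h := Finset.sum_range_sub' (fun n => ∑ k ∈ Finset.range (2 ^ n * (N / 2 ^ n)), f k) (Nat.log 2 N + 1)
  rw [Finset.sum_congr rfl (fun n _ => block_step f N n)] at h
  rw [h]
  have h0 : N / 2 ^ (Nat.log 2 N + 1) = 0 :=
    Nat.div_eq_of_lt (Nat.lt_pow_succ_log_self (by norm_num) N)
  rw [h0]
  simp

lemma dist_tsum_le (F : ℕ → ℝ≥0∞) (n0 : ℕ) :
    ∑' n, F ((n - n0) + (n0 - n)) ≤ 2 * ∑' n, F n := by
  have hsp := Summable.sum_add_tsum_nat_add' (f := fun n => F ((n - n0) + (n0 - n))) (k := n0) ENNReal.summable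
  rw [← hsp, two_mul]
  refine add_le_add ?_ (le_of_eq ?_)
  · have h := Finset.sum_range_reflect (fun n => F (n + 1)) n0
    calc ∑ n ∈ Finset.range n0, F ((n - n0) + (n0 - n))
        = ∑ n ∈ Finset.range n0, F ((n0 - 1 - n) + 1) := by
          refine Finset.sum_congr rfl fun n hn => ?_
          have := Finset.mem_range.1 hn
          congr 1; omega
      _ = ∑ n ∈ Finset.range n0, F (n + 1) := h
      _ ≤ ∑' n, F (n + 1) := ENNReal.sum_le_tsum _
      _ ≤ ∑' n, F n := ENNReal.tsum_comp_le_tsum_of_injective (add_left_injective 1) F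
  · refine tsum_congr fun n => ?_
    congr 1; omega

/-- Constant in the geometric sum. -/
def Gc (β : ℝ) : ℝ := (2:ℝ) ^ β * (2 * ∑' n : ℕ, ((2:ℝ) ^ (-β)) ^ n)

lemma Gc_nonneg (β : ℝ) : 0 ≤ Gc β := by
  unfold Gc
  have : 0 ≤ ∑' n : ℕ, ((2:ℝ) ^ (-β)) ^ n := tsum_nonneg fun n => by positivity
  positivity

lemma geom_dist (β : ℝ) (hβ : 0 < β) (x : ℝ) (hx : 0 ≤ x) (L : ℕ) :
    ∑ n ∈ Finset.range L, (2:ℝ) ^ (-β * |(n:ℝ) - x|) ≤ Gc β := by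
  set ρ : ℝ := (2:ℝ) ^ (-β) with hρ
  have hρ0 : 0 < ρ := by positivity
  have hρ1 : ρ < 1 := Real.rpow_lt_one_of_one_lt_of_neg (by norm_num) (by linarith)
  set n0 := ⌊x⌋₊
  have hs : Summable fun n : ℕ => ρ ^ n := summable_geometric_of_lt_one hρ0.le hρ1
  have h1 : ∀ n : ℕ, (2:ℝ) ^ (-β * |(n:ℝ) - x|) ≤ (2:ℝ) ^ β * ρ ^ ((n - n0) + (n0 - n)) := by
    intro n
    rw [← Real.rpow_natCast, hρ, ← Real.rpow_mul (by norm_num), ← Real.rpow_add (by norm_num)]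
    refine two_rpow_le ?_
    have h2 : (((n - n0) + (n0 - n) : ℕ) : ℝ) ≤ |(n:ℝ) - x| + 1 := by
      have ha := Nat.floor_le hx
      have hb := Nat.lt_floor_add_one x
      rcases le_total n n0 with h | h
      · have h' : (n:ℝ) ≤ n0 := by exact_mod_cast h
        rw [Nat.sub_eq_zero_of_le h, zero_add, Nat.cast_sub h]
        have := neg_le_abs ((n:ℝ) - x)
        change (n0:ℝ) ≤ x at ha
        linarith
      · rw [Nat.sub_eq_zero_of_le h, add_zero, Nat.cast_sub h]
        have := le_abs_self ((n:ℝ) - x)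
        change x < (n0:ℝ) + 1 at hb
        linarith
    nlinarith
  refine (Finset.sum_le_sum fun n _ => h1 n).trans ?_
  rw [← Finset.mul_sum]
  unfold Gc
  refine mul_le_mul_of_nonneg_left ?_ (by positivity)
  have h3 : ENNReal.ofReal (∑ n ∈ Finset.range L, ρ ^ ((n - n0) + (n0 - n))) ≤
      ENNReal.ofReal (2 * ∑' n : ℕ, ρ ^ n) := by
    rw [ENNReal.ofReal_sum_of_nonneg (fun n _ => by positivity), ENNReal.ofReal_mul (by norm_num),
      ENNReal.ofReal_tsum_of_nonneg (fun n => by positivity) hs]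
    refine (ENNReal.sum_le_tsum _).trans ((dist_tsum_le (fun n => ENNReal.ofReal (ρ ^ n)) n0).trans ?_)
    simp
  rwa [ENNReal.ofReal_le_ofReal_iff (mul_nonneg (by norm_num) (tsum_nonneg fun n => by positivity))] at h3

lemma xc_nonneg (nb k t : ℕ) : 0 ≤ xc nb k t := by
  unfold xc; split_ifs <;> positivity

/-- The constant in the coefficient estimate. -/
def Kc (d : ℕ) (p : ℝ) : ℝ := (Cd d + 3) * Gc (1/(2*p))

lemma Kc_nonneg (d : ℕ) (p : ℝ) : 0 ≤ Kc d p := by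
  have := Cd_pos d
  exact mul_nonneg (by linarith) (Gc_nonneg _)

lemma np_coeff (d t : ℕ) (p : ℝ) (hp : 1 ≤ p) (E : Fin d → ℕ → ℕ → ZMod 2)
    (hE : IsOrderSeq 2 t d E) (hT : Triangular2 d E) (N : ℕ) (hN : 2 ≤ N)
    (j : Fin d → ℤ) (hj : ∀ i, -1 ≤ j i) :
    np p (Dfin d j) (haarCoeff d (discSeq d (digitalSeq d E) N) j) ≤
      (1 / (N:ℝ)) * (Kc d p *
      (2:ℝ) ^ ((t:ℝ) - jnorm d j + (min (Nat.log 2 N) (jnorm d j) : ℕ) / p)) := by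
  have hC := Cd_pos d
  set nb := Nat.log 2 N
  set y : ∀ n : ℕ, Fin (2 ^ n) → Fin d → ℕ → ZMod 2 :=
    fun n r i => Yd (E i) (2 ^ n * (2 * (N / 2 ^ (n+1))) + r)
  have hco : haarCoeff d (discSeq d (digitalSeq d E) N) j = fun m => (1 / (N:ℝ)) *
      ∑ n ∈ Finset.range (nb + 1), if (N / 2 ^ n) % 2 = 1 then Abk d n (y n) j m else 0 := by
    funext m
    rw [haarCoeff_disc d _ N (by omega) j hj m, block_decomp]
    rfl
  rw [hco, np_smul p hp _ _ (by positivity)]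
  refine mul_le_mul_of_nonneg_left ?_ (by positivity)
  refine (np_sum p hp (Dfin d j) (Finset.range (nb + 1))
    (fun n m => if (N / 2 ^ n) % 2 = 1 then Abk d n (y n) j m else 0)).trans ?_
  set M := (2:ℝ) ^ ((t:ℝ) - jnorm d j + (min nb (jnorm d j) : ℕ) / p) with hM
  have h1 : ∀ n ∈ Finset.range (nb + 1),
      np p (Dfin d j) (fun m => if (N / 2 ^ n) % 2 = 1 then Abk d n (y n) j m else 0) ≤
      ((Cd d + 3) * M) * (2:ℝ) ^ (-(1/(2*p)) * |(n:ℝ) - xc nb (jnorm d j) t|) := by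
    intro n hn
    have hn' : n ≤ nb := by have := Finset.mem_range.1 hn; omega
    split_ifs with h
    · rw [mul_assoc]
      refine np_Ab d n nb t (2 * (2 ^ n * (2 * (N / 2 ^ (n+1))) + 2 ^ n) + 2 + 2 * n) hn' p hp (y n)
        (shifty_block d n t _ E hE) ?_ (by omega) j hj
      intro r i row hrow
      refine Yd_tri (E i) (hT i) _ _ ?_
      have := r.2
      omega
    · rw [np_zero p hp]; positivity
  refine (Finset.sum_le_sum h1).trans ?_
  rw [← Finset.mul_sum]
  have h2 := geom_dist (1/(2*p)) (by positivity) (xc nb (jnorm d j) t) (xc_nonneg _ _ _) (nb+1)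
  refine (mul_le_mul_of_nonneg_left h2 (by positivity)).trans (le_of_eq ?_)
  unfold Kc; ring

lemma fibre_le (d k : ℕ) (c : ℝ≥0∞) :
    ∑' _b : (fun j : validJ (d+1) => jnorm (d+1) j.1) ⁻¹' {k}, c ≤
      ((2 ^ (d+1) * (k+1) ^ d : ℕ) : ℝ≥0∞) * c := by
  have hle : ∀ b : (fun j : validJ (d+1) => jnorm (d+1) j.1) ⁻¹' {k}, ∀ i, (b.1.1 i).toNat < k + 1 := by
    intro b i
    have h := b.2
    simp only [Set.mem_preimage, Set.mem_singleton_iff] at h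
    have h4 : (b.1.1 i).toNat ≤ jnorm (d+1) b.1.1 :=
      Finset.single_le_sum (f := fun i => (b.1.1 i).toNat) (fun _ _ => Nat.zero_le _) (Finset.mem_univ i)
    omega
  let g : (fun j : validJ (d+1) => jnorm (d+1) j.1) ⁻¹' {k} → (Fin (d+1) → Bool) × (Fin d → Fin (k+1)) :=
    fun b => (fun i => decide (b.1.1 i = -1), fun i => ⟨(b.1.1 i.succ).toNat, hle b i.succ⟩)
  have hg : Function.Injective g := by
    intro b b' h
    simp only [g, Prod.mk.injEq] at h
    obtain ⟨h1, h2⟩ := h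
    have hb := b.2
    have hb' := b'.2
    simp only [Set.mem_preimage, Set.mem_singleton_iff] at hb hb'
    have h3 : ∀ i : Fin d, (b.1.1 i.succ).toNat = (b'.1.1 i.succ).toNat := by
      intro i
      have := congrFun h2 i
      simpa using this
    have h4 : (b.1.1 0).toNat = (b'.1.1 0).toNat := by
      unfold jnorm at hb hb'
      rw [Fin.sum_univ_succ] at hb hb'
      rw [Finset.sum_congr rfl (fun i _ => h3 i)] at hb
      omega
    have h5 : ∀ i, (b.1.1 i).toNat = (b'.1.1 i).toNat := fun i => Fin.cases h4 h3 i
    apply Subtype.ext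
    apply Subtype.ext
    funext i
    have h6 := h5 i
    have h7 : decide (b.1.1 i = -1) = decide (b'.1.1 i = -1) := congrFun h1 i
    have h8 : -1 ≤ b.1.1 i := b.1.2 i
    have h9 : -1 ≤ b'.1.1 i := b'.1.2 i
    rw [decide_eq_decide] at h7
    omega
  refine (ENNReal.tsum_comp_le_tsum_of_injective hg (fun _ => c)).trans (le_of_eq ?_)
  rw [tsum_fintype, Finset.sum_const, Finset.card_univ, nsmul_eq_mul]
  congr 2
  simp

lemma term_bound (d t : ℕ) (p q s : ℝ) (hp : 1 ≤ p) (hq : 1 ≤ q) (hs0 : 0 < s) (hs1 : s < 1/p)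
    (E : Fin d → ℕ → ℕ → ZMod 2)
    (hE : IsOrderSeq 2 t d E) (hT : Triangular2 d E) (N : ℕ) (hN : 2 ≤ N)
    (j : Fin d → ℤ) (hj : ∀ i, -1 ≤ j i) :
    (2:ℝ) ^ ((jnorm d j : ℝ) * (s - 1/p + 1) * q) *
      (∑ m ∈ Dfin d j, |haarCoeff d (discSeq d (digitalSeq d E) N) j m| ^ p) ^ (q / p) ≤
    (Kc d p ^ q * (2:ℝ) ^ (q * (t:ℝ)) * (N:ℝ) ^ ((s-1)*q)) *
      ((2:ℝ) ^ (-(q * min s (1/p - s)))) ^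
        ((jnorm d j - Nat.log 2 N) + (Nat.log 2 N - jnorm d j)) := by
  have hK := Kc_nonneg d p
  have hNR : (0:ℝ) < N := by positivity
  have hp0 : 0 < p := by linarith
  have h1 := np_coeff d t p hp E hE hT N hN j hj
  have h0 := np_nonneg p (Dfin d j) (haarCoeff d (discSeq d (digitalSeq d E) N) j)
  have hq0 : 0 < q := by linarith
  have e1 : (∑ m ∈ Dfin d j, |haarCoeff d (discSeq d (digitalSeq d E) N) j m| ^ p) ^ (q / p)
      = np p (Dfin d j) (haarCoeff d (discSeq d (digitalSeq d E) N) j) ^ q := by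
    unfold np
    rw [← Real.rpow_mul (by positivity)]
    congr 1; ring
  rw [e1]
  have h2 := Real.rpow_le_rpow h0 h1 hq0.le
  refine (mul_le_mul_of_nonneg_left h2 (by positivity)).trans ?_
  set k := jnorm d j
  set nb := Nat.log 2 N with hnb
  have hNb : (2:ℝ) ^ (nb:ℝ) ≤ N := by
    rw [Real.rpow_natCast]
    exact_mod_cast Nat.pow_log_le_self 2 (by omega : N ≠ 0)
  have hNb2 : (2:ℝ) ^ ((nb:ℝ) * (s * q)) ≤ (N:ℝ) ^ (s * q) := by
    rw [Real.rpow_mul (by norm_num)]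
    exact Real.rpow_le_rpow (by positivity) hNb (by positivity)
  have hN2 : (N:ℝ) ^ ((s-1)*q) = (N:ℝ) ^ (s * q) * (1 / (N:ℝ)) ^ q := by
    rw [one_div, Real.inv_rpow hNR.le, ← Real.rpow_neg hNR.le, ← Real.rpow_add hNR]
    congr 1; ring
  rw [hN2, Real.mul_rpow (by positivity) (by positivity), Real.mul_rpow hK (by positivity),
    ← Real.rpow_mul (by norm_num)]
  have hexp : (2:ℝ) ^ ((k : ℝ) * (s - 1/p + 1) * q) *
      (2:ℝ) ^ (((t:ℝ) - k + (min nb k : ℕ) / p) * q) ≤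
      (2:ℝ) ^ (q * (t:ℝ)) * (2:ℝ) ^ ((nb:ℝ) * (s * q)) * ((2:ℝ) ^ (-(q * min s (1/p - s)))) ^
        ((k - nb) + (nb - k)) := by
    rw [← Real.rpow_natCast ((2:ℝ) ^ (-(q * min s (1/p - s)))), ← Real.rpow_mul (by norm_num),
      ← Real.rpow_add (by norm_num), ← Real.rpow_add (by norm_num), ← Real.rpow_add (by norm_num)]
    refine two_rpow_le ?_
    have hm1 := min_le_left s (1/p - s)
    have hm2 := min_le_right s (1/p - s)
    set δ := min s (1/p - s)
    have e3 : ∀ a : ℝ, a / p = a * (1/p) := fun a => by ring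
    set u := 1 / p
    rcases le_total k nb with h | h
    · have h' : (0:ℝ) ≤ nb - k := by have : (k:ℝ) ≤ nb := by exact_mod_cast h
                                     linarith
      rw [min_eq_right h, Nat.sub_eq_zero_of_le h, zero_add, Nat.cast_sub h, e3]
      have h3 : 0 ≤ q * ((nb - k) * (s - δ)) :=
        mul_nonneg hq0.le (mul_nonneg h' (by linarith))
      nlinarith
    · have h' : (0:ℝ) ≤ k - nb := by have : (nb:ℝ) ≤ k := by exact_mod_cast h
                                     linarith
      rw [min_eq_left h, Nat.sub_eq_zero_of_le h, add_zero, Nat.cast_sub h, e3]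
      have h3 : 0 ≤ q * ((k - nb) * (u - s - δ)) :=
        mul_nonneg hq0.le (mul_nonneg h' (by linarith))
      nlinarith
  set A := (2:ℝ) ^ ((k : ℝ) * (s - 1/p + 1) * q)
  set B := (2:ℝ) ^ (((t:ℝ) - k + (min nb k : ℕ) / p) * q)
  set R := ((2:ℝ) ^ (-(q * min s (1/p - s)))) ^ ((k - nb) + (nb - k)) with hR
  have hR0 : 0 < R := by positivity
  calc A * ((1 / (N:ℝ)) ^ q * (Kc d p ^ q * B))
      = ((1 / (N:ℝ)) ^ q * Kc d p ^ q) * (A * B) := by ring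
    _ ≤ ((1 / (N:ℝ)) ^ q * Kc d p ^ q) * ((2:ℝ) ^ (q * (t:ℝ)) * (2:ℝ) ^ ((nb:ℝ) * (s * q)) * R) :=
        mul_le_mul_of_nonneg_left hexp (by positivity)
    _ ≤ ((1 / (N:ℝ)) ^ q * Kc d p ^ q) * ((2:ℝ) ^ (q * (t:ℝ)) * (N:ℝ) ^ (s * q) * R) := by
        gcongr
    _ = _ := by ring

lemma sum_bound (d nb : ℕ) (ρ : ℝ) (h0 : 0 < ρ) (h1 : ρ < 1) :
    ∑' j : validJ (d+1), ENNReal.ofReal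
      (ρ ^ ((jnorm (d+1) j.1 - nb) + (nb - jnorm (d+1) j.1))) ≤
    ENNReal.ofReal (2 ^ (d+1) * (nb+1) ^ d * (2 * ∑' u : ℕ, ((u:ℝ)+1) ^ d * ρ ^ u)) := by
  have hs : Summable fun u : ℕ => ((u:ℝ)+1) ^ d * ρ ^ u := by
    have h := summable_pow_mul_geometric_of_norm_lt_one d (r := ρ)
      (by rw [Real.norm_eq_abs, abs_of_pos h0]; exact h1)
    have h' := ((summable_nat_add_iff 1).2 h).mul_left (ρ⁻¹)
    refine h'.congr fun u => ?_
    push_cast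
    rw [pow_succ]
    field_simp
  rw [← ENNReal.tsum_fiberwise _ (fun j : validJ (d+1) => jnorm (d+1) j.1)]
  have hstep : ∀ k : ℕ, ∑' b : (fun j : validJ (d+1) => jnorm (d+1) j.1) ⁻¹' {k},
      ENNReal.ofReal (ρ ^ ((jnorm (d+1) b.1.1 - nb) + (nb - jnorm (d+1) b.1.1))) ≤
      ENNReal.ofReal (2 ^ (d+1) * (nb+1) ^ d) *
        ENNReal.ofReal (((((k - nb) + (nb - k) : ℕ) : ℝ) + 1) ^ d * ρ ^ ((k - nb) + (nb - k))) := by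
    intro k
    have : ∀ b : (fun j : validJ (d+1) => jnorm (d+1) j.1) ⁻¹' {k},
        ENNReal.ofReal (ρ ^ ((jnorm (d+1) b.1.1 - nb) + (nb - jnorm (d+1) b.1.1))) =
        ENNReal.ofReal (ρ ^ ((k - nb) + (nb - k))) := by
      intro b
      have hb : jnorm (d+1) b.1.1 = k := b.2
      rw [hb]
    rw [tsum_congr this]
    refine (fibre_le d k _).trans ?_
    rw [← ENNReal.ofReal_natCast, ← ENNReal.ofReal_mul (by positivity), ← ENNReal.ofReal_mul (by positivity)]
    refine ENNReal.ofReal_le_ofReal ?_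
    rw [← mul_assoc]
    refine mul_le_mul_of_nonneg_right ?_ (by positivity)
    rw [mul_assoc, ← mul_pow]
    push_cast
    refine mul_le_mul_of_nonneg_left ?_ (by positivity)
    refine pow_le_pow_left₀ (by positivity) ?_ d
    have : k + 1 ≤ (nb + 1) * (((k - nb) + (nb - k)) + 1) := by
      have : k + 1 ≤ nb + ((k - nb) + (nb - k)) + 1 := by omega
      nlinarith [Nat.zero_le (nb * ((k - nb) + (nb - k)))]
    exact_mod_cast this
  refine (ENNReal.tsum_le_tsum hstep).trans ?_
  rw [ENNReal.tsum_mul_left, ENNReal.ofReal_mul (p := 2 ^ (d+1) * ((nb:ℝ)+1) ^ d) (by positivity)]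
  refine mul_le_mul_right ?_ _
  refine (dist_tsum_le (fun u : ℕ => ENNReal.ofReal (((u:ℝ) + 1) ^ d * ρ ^ u)) nb).trans (le_of_eq ?_)
  rw [ENNReal.ofReal_mul (by norm_num), ENNReal.ofReal_tsum_of_nonneg (fun n => by positivity) hs]
  simp

lemma log_bound (N : ℕ) (hN : 2 ≤ N) : ((Nat.log 2 N : ℕ) : ℝ) + 1 ≤ (2 / Real.log 2) * Real.log N := by
  have h1 : 1 ≤ Nat.log 2 N := Nat.log_pos (by norm_num) hN
  have h1R : (1:ℝ) ≤ (Nat.log 2 N : ℕ) := by exact_mod_cast h1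
  have h2 : ((Nat.log 2 N : ℕ) : ℝ) * Real.log 2 ≤ Real.log N := by
    rw [← Real.log_pow]
    refine Real.log_le_log (by positivity) ?_
    exact_mod_cast Nat.pow_log_le_self 2 (by omega : N ≠ 0)
  have h3 : 0 < Real.log 2 := Real.log_pos (by norm_num)
  rw [div_mul_eq_mul_div, le_div_iff₀ h3]
  nlinarith

lemma besov_main (d : ℕ) (p q s : ℝ) (hp : 1 ≤ p) (hq : 1 ≤ q)
    (hs0 : 0 < s) (hs1 : s < 1/p) :
    ∃ C : ℝ, 0 < C ∧ ∀ (t : ℕ) (E : Fin (d+1) → ℕ → ℕ → ZMod 2),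
      IsOrderSeq 2 t (d+1) E → Triangular2 (d+1) E →
      ∀ N : ℕ, 2 ≤ N →
        besovSum (d+1) p q s (discSeq (d+1) (digitalSeq (d+1) E) N) ≤
          ENNReal.ofReal (C * (2:ℝ) ^ (q * (t:ℝ)) * (N:ℝ) ^ ((s - 1) * q) *
            Real.log N ^ d) := by
  set ρ : ℝ := (2:ℝ) ^ (-(q * min s (1/p - s))) with hρ
  have hδ : 0 < min s (1/p - s) := lt_min hs0 (by linarith)
  have hρ0 : 0 < ρ := by positivity
  have hρ1 : ρ < 1 := Real.rpow_lt_one_of_one_lt_of_neg (by norm_num) (by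
    have : 0 < q * min s (1/p - s) := by positivity
    linarith)
  have hK := Kc_nonneg (d+1) p
  have hl2 : 0 < Real.log 2 := Real.log_pos (by norm_num)
  set H : ℝ := ∑' u : ℕ, ((u:ℝ)+1) ^ d * ρ ^ u
  have hH : 0 ≤ H := tsum_nonneg fun u => by positivity
  set C0 : ℝ := Kc (d+1) p ^ q * (2 ^ (d+1) * (2 / Real.log 2) ^ d * (2 * H)) with hC0
  have hC00 : 0 ≤ C0 := by positivity
  refine ⟨C0 + 1, by linarith, ?_⟩
  intro t E hE hT N hN
  have hlN : 0 ≤ Real.log N := Real.log_natCast_nonneg N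
  set P : ℝ := Kc (d+1) p ^ q * (2:ℝ) ^ (q * (t:ℝ)) * (N:ℝ) ^ ((s-1)*q) with hP
  have hP0 : 0 ≤ P := by positivity
  unfold besovSum
  calc _ ≤ ∑' j : validJ (d+1), ENNReal.ofReal P * ENNReal.ofReal
          (ρ ^ ((jnorm (d+1) j.1 - Nat.log 2 N) + (Nat.log 2 N - jnorm (d+1) j.1))) := by
        refine ENNReal.tsum_le_tsum fun j => ?_
        rw [← ENNReal.ofReal_mul hP0]
        exact ENNReal.ofReal_le_ofReal
          (term_bound (d+1) t p q s hp hq hs0 hs1 E hE hT N hN j.1 j.2)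
    _ ≤ ENNReal.ofReal P * ENNReal.ofReal (2 ^ (d+1) * ((Nat.log 2 N : ℕ)+1) ^ d * (2 * H)) := by
        rw [ENNReal.tsum_mul_left]
        exact mul_le_mul_right (sum_bound d (Nat.log 2 N) ρ hρ0 hρ1) _
    _ ≤ _ := by
        rw [← ENNReal.ofReal_mul hP0]
        refine ENNReal.ofReal_le_ofReal ?_
        have hlb : (((Nat.log 2 N : ℕ) : ℝ)+1) ^ d ≤ (2 / Real.log 2) ^ d * Real.log N ^ d := by
          rw [← mul_pow]
          exact pow_le_pow_left₀ (by positivity) (log_bound N hN) d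
        calc P * (2 ^ (d+1) * (((Nat.log 2 N : ℕ) : ℝ)+1) ^ d * (2 * H))
            ≤ P * (2 ^ (d+1) * ((2 / Real.log 2) ^ d * Real.log N ^ d) * (2 * H)) := by gcongr
          _ = C0 * (2:ℝ) ^ (q * (t:ℝ)) * (N:ℝ) ^ ((s - 1) * q) * Real.log N ^ d := by
            rw [hP, hC0]; ring
          _ ≤ _ := by gcongr; linarith

/-- Besov `S^s_{p,q}B` upper bound, `0 < s < 1/p`, for order `2` digital
`(t,d)`-sequences with triangular generating matrices:
`∑_j 2^{|j|(s-1/p+1)q} (∑_m |⟨D^N,h_{j,m}⟩|^p)^{q/p} ≤ C · 2^{qt} · N^{(s-1)q} (log N)^{d-1}`. -/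
theorem besov_s_upper_bound (d : ℕ) (hd : 0 < d) (p q s : ℝ) (hp : 1 ≤ p) (hq : 1 ≤ q)
    (hs0 : 0 < s) (hs1 : s < 1/p) :
    ∃ C : ℝ, 0 < C ∧ ∀ (t : ℕ) (E : Fin d → ℕ → ℕ → ZMod 2),
      IsOrderSeq 2 t d E → Triangular2 d E →
      ∀ N : ℕ, 2 ≤ N →
        besovSum d p q s (discSeq d (digitalSeq d E) N) ≤
          ENNReal.ofReal (C * (2:ℝ) ^ (q * (t:ℝ)) * (N:ℝ) ^ ((s - 1) * q) *
            Real.log N ^ (d - 1)) := by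
  obtain ⟨e, rfl⟩ : ∃ e, d = e + 1 := ⟨d - 1, by omega⟩
  exact besov_main e p q s hp hq hs0 hs1

end
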